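/- arXiv:1508.00606 — 2 statements merged into one kernel-verified Lean document; each statement's English description precedes it below -/
import Mathlib

section
/- Let n ≥ 1 and p ∈ [2,∞], and let B̃_pⁿ denote the unit ball of ℓ_pⁿ (the set {x ∈ ℝⁿ : Σ|x_i|^p ≤ 1}, respectively {x : max|x_i| ≤ 1} for p = ∞) rescaled by a homothety to have Lebesgue volume 1, and let λ_{B̃_pⁿ} denote the uniform (Lebesgue) probability measure on B̃_pⁿ. Then for every k ≥ 1, λ_k^Lip(B̃_pⁿ, |·|, λ_{B̃_pⁿ}) ≥ (1/392)·λ_k^Lip(ℝⁿ,|·|,γⁿ), where B̃_pⁿ is endowed with the restriction of the Euclidean distance |·|. -/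
open MeasureTheory Filter Topology ENNReal Pointwise

/-- The local Lipschitz constant `|∇f|(x) = limsup_{y→x} |f(y)-f(x)|/d(y,x)`
(equal to `0` at isolated points, by the convention `Real.sInf ∅ = 0`). -/
noncomputable def localLip {Ω : Type*} [PseudoMetricSpace Ω] (f : Ω → ℝ) (x : Ω) : ℝ :=
  Filter.limsup (fun y => |f y - f x| / dist y x) (nhdsWithin x {x}ᶜ)

/-- Membership in the metric Sobolev space `W^{1,2}_Lip(Ω,d,μ)`. -/
def memW12Lip {Ω : Type*} [PseudoMetricSpace Ω] [MeasurableSpace Ω]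
    (μ : Measure Ω) (f : Ω → ℝ) : Prop :=
  LocallyLipschitz f ∧
    (∫⁻ x, ENNReal.ofReal ((f x) ^ 2) ∂μ) + (∫⁻ x, ENNReal.ofReal ((localLip f x) ^ 2) ∂μ) < ⊤

/-- The `k`-th metric eigenvalue `λ_k^Lip(Ω,d,μ)`: the infimum over `k`-dimensional
linear subspaces `F ⊆ W^{1,2}_Lip` of the supremum of the Rayleigh quotient over `F`. -/
noncomputable def lambdaLip {Ω : Type*} [PseudoMetricSpace Ω] [MeasurableSpace Ω]
    (μ : Measure Ω) (k : ℕ) : ℝ :=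
  sInf { a : ℝ | ∃ F : Submodule ℝ (Ω → ℝ), Module.finrank ℝ F = k ∧
    (∀ f ∈ F, memW12Lip μ f) ∧
    a = sSup { r : ℝ | ∃ f ∈ F, (∫ x, (f x) ^ 2 ∂μ) ≠ 0 ∧
      r = (∫ x, (localLip f x) ^ 2 ∂μ) / (∫ x, (f x) ^ 2 ∂μ) } }

/-- The standard Gaussian probability measure `γⁿ` on `ℝⁿ`, with density proportional
to `exp(-|x|²/2)` with respect to Lebesgue measure, normalized to total mass one. -/
noncomputable def stdGaussian (n : ℕ) : Measure (EuclideanSpace ℝ (Fin n)) :=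
  ((volume.withDensity fun x : EuclideanSpace ℝ (Fin n) =>
      ENNReal.ofReal (Real.exp (-‖x‖ ^ 2 / 2))) Set.univ)⁻¹ •
    volume.withDensity fun x : EuclideanSpace ℝ (Fin n) =>
      ENNReal.ofReal (Real.exp (-‖x‖ ^ 2 / 2))

/-- The unit ball of `ℓ_pⁿ` inside Euclidean space, for `p ∈ [1,∞]`:
`{x : ∑ᵢ |xᵢ|^p ≤ 1}` for finite `p`, and `{x : ∀ i, |xᵢ| ≤ 1}` for `p = ∞`. -/
noncomputable def lpUnitBall (n : ℕ) (p : ℝ≥0∞) : Set (EuclideanSpace ℝ (Fin n)) :=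
  if p = ∞ then {x | ∀ i, |x i| ≤ 1} else {x | ∑ i, |x i| ^ p.toReal ≤ 1}

theorem localLip_nonneg {Ω : Type*} [PseudoMetricSpace Ω] (f : Ω → ℝ) (x : Ω) :
    0 ≤ localLip f x := by
  unfold localLip
  rcases (nhdsWithin x {x}ᶜ).eq_or_neBot with h | h
  · simp [h, Filter.limsup, Filter.limsSup]
  · apply Real.sInf_nonneg
    intro a ha
    have ha' : ∀ᶠ y in nhdsWithin x {x}ᶜ, |f y - f x| / dist y x ≤ a := by simpa using ha
    obtain ⟨y, hy⟩ := ha'.exists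
    exact le_trans (by positivity) hy

theorem localLip_le {Ω : Type*} [PseudoMetricSpace Ω] {f : Ω → ℝ} {x : Ω} {b : ℝ} (hb : 0 ≤ b)
    (h : ∀ᶠ y in 𝓝 x, |f y - f x| ≤ b * dist y x) : localLip f x ≤ b := by
  unfold localLip
  rcases (nhdsWithin x {x}ᶜ).eq_or_neBot with h' | h'
  · simpa [h', Filter.limsup, Filter.limsSup] using hb
  · apply csInf_le
    · refine ⟨0, ?_⟩
      intro a ha
      have ha' : ∀ᶠ y in nhdsWithin x {x}ᶜ, |f y - f x| / dist y x ≤ a := by simpa using ha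
      obtain ⟨y, hy⟩ := ha'.exists
      exact le_trans (by positivity) hy
    · have : ∀ᶠ y in nhdsWithin x {x}ᶜ, |f y - f x| / dist y x ≤ b := by
        filter_upwards [nhdsWithin_le_nhds h] with y hy
        exact div_le_of_le_mul₀ dist_nonneg hb hy
      simpa using this

theorem eventually_of_localLip_lt {Ω : Type*} [MetricSpace Ω] {f : Ω → ℝ}
    (hf : LocallyLipschitz f) {x : Ω} {b : ℝ} (hb : localLip f x < b) :
    ∀ᶠ y in 𝓝 x, |f y - f x| ≤ b * dist y x := by
  obtain ⟨K, t, ht, hK⟩ := hf x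
  have hxt : x ∈ t := mem_of_mem_nhds ht
  have hbd : ∀ᶠ y in nhdsWithin x {x}ᶜ, |f y - f x| / dist y x ≤ K := by
    filter_upwards [nhdsWithin_le_nhds ht] with y hy
    apply div_le_of_le_mul₀ dist_nonneg K.2
    have := hK.dist_le_mul y hy x hxt
    rwa [Real.dist_eq] at this
  have := Filter.eventually_lt_of_limsup_lt (f := nhdsWithin x {x}ᶜ) (b := b) hb ⟨K, by simpa using hbd⟩
  rw [eventually_nhdsWithin_iff] at this
  filter_upwards [this] with y hy
  by_cases hyx : y = x
  · simp [hyx]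
  · have h0 : 0 < dist y x := dist_pos.2 hyx
    exact ((div_lt_iff₀ h0).1 (hy hyx)).le

theorem measurable_localLip {Ω : Type*} [MetricSpace Ω] [MeasurableSpace Ω]
    [OpensMeasurableSpace Ω] {f : Ω → ℝ} (hf : LocallyLipschitz f) :
    Measurable (localLip f) := by
  apply measurable_of_Iio
  intro a
  by_cases ha : a ≤ 0
  · convert MeasurableSet.empty
    ext x
    simpa using ha.trans (localLip_nonneg f x)
  push Not at ha
  have : localLip f ⁻¹' Set.Iio a = ⋃ (b : {b : ℚ // 0 ≤ (b : ℝ) ∧ (b : ℝ) < a}), ⋃ m : ℕ,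
      {x | ∀ y, dist y x < 1 / ((m : ℝ) + 1) → |f y - f x| ≤ (b : ℚ) * dist y x} := by
    ext x
    simp only [Set.mem_preimage, Set.mem_Iio, Set.mem_iUnion, Set.mem_ofPred_eq]
    constructor
    · intro h
      obtain ⟨b, hb1, hb2⟩ := exists_rat_btwn h
      refine ⟨⟨b, (localLip_nonneg f x).trans hb1.le, hb2⟩, ?_⟩
      have := eventually_of_localLip_lt hf hb1
      obtain ⟨ε, hε, h2⟩ := Metric.eventually_nhds_iff.1 this
      obtain ⟨m, hm⟩ := exists_nat_one_div_lt hε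
      exact ⟨m, fun y hy => h2 (hy.trans hm)⟩
    · rintro ⟨⟨b, hb0, hb⟩, m, h⟩
      refine lt_of_le_of_lt (localLip_le hb0 ?_) hb
      exact Metric.eventually_nhds_iff.2 ⟨1 / ((m : ℝ) + 1), by positivity, fun y hy => h y hy⟩
  rw [this]
  refine MeasurableSet.iUnion fun b => MeasurableSet.iUnion fun m => IsClosed.measurableSet ?_
  rw [← isSeqClosed_iff_isClosed]
  intro u x hu hx y hy
  have hc := hf.continuous
  have h1 : Tendsto (fun j => |f y - f (u j)|) atTop (𝓝 |f y - f x|) :=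
    ((tendsto_const_nhds).sub ((hc.tendsto x).comp hx)).abs
  have h2 : Tendsto (fun j => dist y (u j)) atTop (𝓝 (dist y x)) := tendsto_const_nhds.dist hx
  refine le_of_tendsto_of_tendsto h1 (h2.const_mul _) ?_
  filter_upwards [h2.eventually (gt_mem_nhds hy)] with j hj
  exact hu j y hj

theorem localLip_comp_le {X Y : Type*} [MetricSpace X] [MetricSpace Y] {T : X → Y} {L : NNReal}
    (hT : LipschitzWith L T) {f : Y → ℝ} (hf : LocallyLipschitz f) (x : X) :
    localLip (f ∘ T) x ≤ L * localLip f (T x) := by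
  have key : ∀ ε : ℝ, 0 < ε → localLip (f ∘ T) x ≤ L * (localLip f (T x) + ε) := by
    intro ε hε
    have h0 := localLip_nonneg f (T x)
    apply localLip_le (by positivity)
    have := eventually_of_localLip_lt hf (lt_add_of_pos_right (localLip f (T x)) hε)
    filter_upwards [(hT.continuous.tendsto x).eventually this] with y hy
    calc _ ≤ _ := hy
      _ ≤ (localLip f (T x) + ε) * (L * dist y x) := by
        gcongr
        exact hT.dist_le_mul y x
      _ = _ := by ring
  have ht : Tendsto (fun ε : ℝ => L * (localLip f (T x) + ε)) (𝓝[>] 0) (𝓝 (L * (localLip f (T x) + 0))) := by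
    apply Tendsto.mono_left _ nhdsWithin_le_nhds
    exact ((continuous_const.add continuous_id).const_smul (L : ℝ)).tendsto 0
  have := ge_of_tendsto ht (by filter_upwards [self_mem_nhdsWithin] with ε hε using key ε hε)
  simpa using this

theorem localLip_sum_le {Y ι : Type*} [Fintype ι] [MetricSpace Y] (c : ι → ℝ) (b : ι → Y → ℝ)
    (hb : ∀ i, LocallyLipschitz (b i)) (x : Y) :
    localLip (∑ i, c i • b i) x ≤ ∑ i, |c i| * localLip (b i) x := by
  have key : ∀ ε : ℝ, 0 < ε → localLip (∑ i, c i • b i) x ≤ ∑ i, |c i| * (localLip (b i) x + ε) := by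
    intro ε hε
    apply localLip_le
    · exact Finset.sum_nonneg fun i _ => mul_nonneg (abs_nonneg _)
        (add_nonneg (localLip_nonneg _ _) hε.le)
    have : ∀ᶠ y in 𝓝 x, ∀ i, |b i y - b i x| ≤ (localLip (b i) x + ε) * dist y x :=
      eventually_all.2 fun i =>
        eventually_of_localLip_lt (hb i) (lt_add_of_pos_right (localLip (b i) x) hε)
    filter_upwards [this] with y hy
    simp only [Finset.sum_apply, Pi.smul_apply, smul_eq_mul]
    rw [← Finset.sum_sub_distrib, Finset.sum_mul]
    refine (Finset.abs_sum_le_sum_abs _ _).trans (Finset.sum_le_sum fun i _ => ?_)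
    rw [← mul_sub, abs_mul, mul_assoc]
    exact mul_le_mul_of_nonneg_left (hy i) (abs_nonneg _)
  have ht : Tendsto (fun ε : ℝ => ∑ i, |c i| * (localLip (b i) x + ε)) (𝓝[>] 0)
      (𝓝 (∑ i, |c i| * (localLip (b i) x + 0))) := by
    apply Tendsto.mono_left _ nhdsWithin_le_nhds
    have : Continuous (fun ε : ℝ => ∑ i, |c i| * (localLip (b i) x + ε)) := by fun_prop
    exact this.tendsto 0
  have := ge_of_tendsto ht (by filter_upwards [self_mem_nhdsWithin] with ε hε using key ε hε)
  simpa using this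

theorem memW12_integrable {Y : Type*} [MetricSpace Y] [MeasurableSpace Y]
    [BorelSpace Y] {ν : Measure Y} {f : Y → ℝ} (h : memW12Lip ν f) :
    Integrable (fun x => f x ^ 2) ν ∧ Integrable (fun x => localLip f x ^ 2) ν := by
  obtain ⟨h1, h2⟩ := h
  have hm := h1.continuous.measurable
  have hm2 := measurable_localLip h1
  rw [ENNReal.add_lt_top] at h2
  constructor
  · refine ⟨(hm.pow_const 2).aestronglyMeasurable, ?_⟩
    rw [hasFiniteIntegral_iff_ofReal (Eventually.of_forall fun x => by positivity)]
    exact h2.1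
  · refine ⟨(hm2.pow_const 2).aestronglyMeasurable, ?_⟩
    rw [hasFiniteIntegral_iff_ofReal (Eventually.of_forall fun x => by positivity)]
    exact h2.2

theorem eq_zero_of_sq_int {Y : Type*} [MetricSpace Y] [MeasurableSpace Y]
    [BorelSpace Y] {ν : Measure Y} [ν.IsOpenPosMeasure] {f : Y → ℝ} (h : memW12Lip ν f)
    (h0 : ∫ x, f x ^ 2 ∂ν = 0) : f = 0 := by
  have := (integral_eq_zero_iff_of_nonneg (fun x => sq_nonneg (f x)) (memW12_integrable h).1).1 h0
  have h2 : f =ᵐ[ν] (0 : Y → ℝ) := by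
    filter_upwards [this] with x hx
    simpa using hx
  exact Continuous.ae_eq_iff_eq ν h.1.continuous continuous_const |>.1 h2

theorem bdd_rayleigh {Y : Type*} [MetricSpace Y] [MeasurableSpace Y]
    [BorelSpace Y] {ν : Measure Y} [ν.IsOpenPosMeasure] (F : Submodule ℝ (Y → ℝ))
    [FiniteDimensional ℝ F] (hF : ∀ f ∈ F, memW12Lip ν f) :
    BddAbove { r : ℝ | ∃ f ∈ F, (∫ x, (f x) ^ 2 ∂ν) ≠ 0 ∧
      r = (∫ x, (localLip f x) ^ 2 ∂ν) / (∫ x, (f x) ^ 2 ∂ν) } := by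
  classical
  let b := Module.finBasis ℝ F
  have hL2 : ∀ f ∈ F, MemLp f 2 ν := fun f hf =>
    (memLp_two_iff_integrable_sq (hF f hf).1.continuous.measurable.aestronglyMeasurable).2
      (memW12_integrable (hF f hf)).1
  let Φ : F →ₗ[ℝ] Lp ℝ 2 ν :=
    { toFun := fun f => (hL2 f.1 f.2).toLp f.1
      map_add' := fun f g => rfl
      map_smul' := fun c f => rfl }
  have hnorm : ∀ f : F, ‖Φ f‖ ^ 2 = ∫ x, (f.1 x) ^ 2 ∂ν := by
    intro f
    rw [← real_inner_self_eq_norm_sq, MeasureTheory.L2.inner_def]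
    apply integral_congr_ae
    filter_upwards [(hL2 f.1 f.2).coeFn_toLp] with x hx
    change inner ℝ (((hL2 f.1 f.2).toLp f.1) x) (((hL2 f.1 f.2).toLp f.1) x) = _
    rw [hx]
    simp [sq]
  let Ψ : (Fin (Module.finrank ℝ F) → ℝ) →ₗ[ℝ] Lp ℝ 2 ν := Φ ∘ₗ b.equivFun.symm.toLinearMap
  have hker : LinearMap.ker Ψ = ⊥ := by
    rw [LinearMap.ker_eq_bot']
    intro c hc
    have : Φ (b.equivFun.symm c) = 0 := hc
    have h1 := hnorm (b.equivFun.symm c)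
    rw [this] at h1
    have h2 := eq_zero_of_sq_int (hF _ (b.equivFun.symm c).2) (by simpa using h1.symm)
    have h3 : b.equivFun.symm c = 0 := Subtype.ext h2
    exact b.equivFun.symm.map_eq_zero_iff.1 h3
  obtain ⟨K, hK0, hK⟩ := Ψ.exists_antilipschitzWith hker
  let M : ℝ := ∑ i, ∫ x, (localLip (b i).1 x) ^ 2 ∂ν
  refine ⟨(Fintype.card (Fin (Module.finrank ℝ F))) * K ^ 2 * M, ?_⟩
  rintro r ⟨f, hf, hne, rfl⟩
  have hpos : 0 < ∫ x, f x ^ 2 ∂ν :=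
    lt_of_le_of_ne (integral_nonneg fun x => sq_nonneg _) (Ne.symm hne)
  rw [div_le_iff₀ hpos]
  let c := b.equivFun ⟨f, hf⟩
  have hfc : f = ∑ i, c i • (b i).1 := by
    have := b.sum_equivFun ⟨f, hf⟩
    have := congrArg F.subtype this
    rw [map_sum] at this
    exact this.symm
  have hcn : ∀ i, |c i| ^ 2 ≤ K ^ 2 * ∫ x, f x ^ 2 ∂ν := by
    intro i
    have h1 : ‖c‖ ≤ K * ‖Ψ c‖ := by
      have := hK.le_mul_dist c 0
      simpa using this
    have h2 : Ψ c = Φ ⟨f, hf⟩ := by simp [Ψ, c]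
    rw [h2] at h1
    rw [← hnorm ⟨f, hf⟩, ← mul_pow]
    exact pow_le_pow_left₀ (abs_nonneg _) ((norm_le_pi_norm c i).trans h1) 2
  have hint : ∀ i, Integrable (fun x => localLip (b i).1 x ^ 2) ν :=
    fun i => (memW12_integrable (hF _ (b i).2)).2
  calc ∫ x, localLip f x ^ 2 ∂ν
      ≤ ∫ x, (Fintype.card (Fin (Module.finrank ℝ F))) * ∑ i, |c i| ^ 2 * localLip (b i).1 x ^ 2 ∂ν := by
        apply integral_mono_of_nonneg (Eventually.of_forall fun x => sq_nonneg _)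
        · exact (integrable_finsetSum _ fun i _ => (hint i).const_mul _).const_mul _
        · refine Eventually.of_forall fun x => ?_
          have h1 := localLip_sum_le c (fun i => (b i).1) (fun i => (hF _ (b i).2).1) x
          rw [← hfc] at h1
          have h2 := pow_le_pow_left₀ (localLip_nonneg f x) h1 2
          refine h2.trans ?_
          have := sq_sum_le_card_mul_sum_sq (s := Finset.univ) (f := fun i => |c i| * localLip (b i).1 x)
          simpa [mul_pow] using this
    _ = (Fintype.card (Fin (Module.finrank ℝ F))) * ∑ i, |c i| ^ 2 * ∫ x, localLip (b i).1 x ^ 2 ∂ν := by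
        rw [integral_const_mul, integral_finsetSum _ fun i _ => (hint i).const_mul _]
        simp only [integral_const_mul]
    _ ≤ (Fintype.card (Fin (Module.finrank ℝ F))) * ∑ i, (K ^ 2 * ∫ x, f x ^ 2 ∂ν) * ∫ x, localLip (b i).1 x ^ 2 ∂ν := by
        gcongr with i
        exact hcn i
    _ = _ := by
        rw [← Finset.mul_sum]; ring

theorem lambda_transfer {X Y : Type*} [MetricSpace X] [MeasurableSpace X] [BorelSpace X]
    [MetricSpace Y] [MeasurableSpace Y]
    [BorelSpace Y] {μ : Measure X} {ν : Measure Y} [ν.IsOpenPosMeasure] {T : X → Y} {L : NNReal}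
    (hT : LipschitzWith L T) (hm : MeasurePreserving T μ ν) {C : ℝ} (hC : 0 < C)
    (hLC : (L : ℝ) ^ 2 ≤ C) (k : ℕ) (hk : 1 ≤ k)
    (hne : ∃ F : Submodule ℝ (Y → ℝ), Module.finrank ℝ F = k ∧ ∀ f ∈ F, memW12Lip ν f) :
    1 / C * lambdaLip μ k ≤ lambdaLip ν k := by
  unfold lambdaLip
  obtain ⟨F0, hF0, hF0'⟩ := hne
  refine le_csInf ⟨_, F0, hF0, hF0', rfl⟩ ?_
  rintro a ⟨F, hFk, hF, rfl⟩
  rw [one_div, inv_mul_le_iff₀ hC]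
  have : FiniteDimensional ℝ F := FiniteDimensional.of_finrank_pos (by omega)
  have hcomp : ∀ f ∈ F, ∫ x, (f (T x)) ^ 2 ∂μ = ∫ y, f y ^ 2 ∂ν := by
    intro f hf
    have hc := (hF f hf).1.continuous
    have hms : AEStronglyMeasurable (fun y => f y ^ 2) (Measure.map T μ) :=
      (hc.pow 2).measurable.aestronglyMeasurable
    rw [← hm.map_eq, integral_map hm.measurable.aemeasurable hms]
  have hW : ∀ f ∈ F, memW12Lip μ (f ∘ T) := by
    intro f hf
    have hc := (hF f hf).1.continuous
    refine ⟨(hF f hf).1.comp hT.locallyLipschitz, ?_⟩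
    have h2 := (hF f hf).2
    rw [ENNReal.add_lt_top] at h2 ⊢
    constructor
    · have := hm.lintegral_comp (f := fun y => ENNReal.ofReal (f y ^ 2))
        ((hc.pow 2).measurable.ennreal_ofReal)
      simp only [Function.comp]
      rw [this]
      exact h2.1
    · have := hm.lintegral_comp (f := fun y => ENNReal.ofReal (localLip f y ^ 2))
        (((measurable_localLip (hF f hf).1).pow_const 2).ennreal_ofReal)
      calc _ ≤ ∫⁻ x, ENNReal.ofReal ((L : ℝ) ^ 2) * ENNReal.ofReal (localLip f (T x) ^ 2) ∂μ := by
            apply lintegral_mono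
            intro x
            dsimp only
            rw [← ENNReal.ofReal_mul (by positivity), ← mul_pow]
            exact ENNReal.ofReal_le_ofReal
              (pow_le_pow_left₀ (localLip_nonneg _ _) (localLip_comp_le hT (hF f hf).1 x) 2)
        _ = ENNReal.ofReal ((L : ℝ) ^ 2) * ∫⁻ y, ENNReal.ofReal (localLip f y ^ 2) ∂ν := by
            rw [lintegral_const_mul' _ _ ENNReal.ofReal_ne_top, this]
        _ < ⊤ := ENNReal.mul_lt_top ENNReal.ofReal_lt_top h2.2
  let Λ : F →ₗ[ℝ] (X → ℝ) := (LinearMap.funLeft ℝ ℝ T) ∘ₗ F.subtype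
  have hinj : Function.Injective Λ := by
    rw [← LinearMap.ker_eq_bot, LinearMap.ker_eq_bot']
    intro f hf
    have h0 : ∀ x, f.1 (T x) = 0 := fun x => congrFun hf x
    have := hcomp f.1 f.2
    simp only [h0] at this
    exact Subtype.ext (eq_zero_of_sq_int (hF _ f.2) (by simpa using this.symm))
  refine (csInf_le (a := sSup { r : ℝ | ∃ f ∈ LinearMap.range Λ, (∫ x, (f x) ^ 2 ∂μ) ≠ 0 ∧
      r = (∫ x, (localLip f x) ^ 2 ∂μ) / (∫ x, (f x) ^ 2 ∂μ) }) ?_ ?_).trans ?_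
  · refine ⟨0, ?_⟩
    rintro a ⟨F', _, _, rfl⟩
    apply Real.sSup_nonneg
    rintro r ⟨f, _, _, rfl⟩
    exact div_nonneg (integral_nonneg fun x => sq_nonneg _) (integral_nonneg fun x => sq_nonneg _)
  · refine ⟨LinearMap.range Λ, ?_, ?_, rfl⟩
    · rw [LinearMap.finrank_range_of_inj hinj, hFk]
    · rintro _ ⟨f, rfl⟩
      exact hW f.1 f.2
  · apply Real.sSup_le
    · rintro r ⟨_, ⟨f, rfl⟩, hne, rfl⟩
      have hΛ : (Λ f : X → ℝ) = f.1 ∘ T := rfl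
      have hc := hcomp f.1 f.2
      have hne' : ∫ y, f.1 y ^ 2 ∂ν ≠ 0 := by
        rw [← hc]; exact hne
      have hle := le_csSup (bdd_rayleigh F hF) ⟨f.1, f.2, hne', rfl⟩
      refine le_trans ?_ (mul_le_mul_of_nonneg_left hle hC.le)
      have hden : ∫ x, (Λ f x) ^ 2 ∂μ = ∫ y, f.1 y ^ 2 ∂ν := hc
      rw [hden, ← mul_div_assoc]
      apply div_le_div_of_nonneg_right _ (integral_nonneg fun x => sq_nonneg _)
      have hint := (memW12_integrable (hF f.1 f.2)).2
      have hmeas := (measurable_localLip (hF f.1 f.2).1).pow_const 2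
      calc _ ≤ ∫ x, C * (localLip f.1 (T x)) ^ 2 ∂μ := by
            apply integral_mono_of_nonneg (Eventually.of_forall fun x => sq_nonneg _)
            · exact Integrable.const_mul ((hm.integrable_comp hmeas.aestronglyMeasurable).2 hint) _
            · refine Eventually.of_forall fun x => ?_
              dsimp only
              have h1 := pow_le_pow_left₀ (localLip_nonneg _ _) (localLip_comp_le hT (hF f.1 f.2).1 x) 2
              rw [mul_pow] at h1
              exact h1.trans (mul_le_mul_of_nonneg_right hLC (sq_nonneg _))
        _ = _ := by
            rw [integral_const_mul, ← hm.map_eq, integral_map hm.measurable.aemeasurable]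
            exact hmeas.aestronglyMeasurable
    · refine mul_nonneg hC.le (Real.sSup_nonneg ?_)
      rintro r ⟨f, _, _, rfl⟩
      exact div_nonneg (integral_nonneg fun x => sq_nonneg _) (integral_nonneg fun x => sq_nonneg _)

theorem openPos_subtype {n : ℕ} {B : Set (EuclideanSpace ℝ (Fin n))}
    (hcpt : IsCompact B) (hconv : Convex ℝ B) (hint : (interior B).Nonempty) :
    (Measure.comap (Subtype.val : B → EuclideanSpace ℝ (Fin n)) volume).IsOpenPosMeasure := by
  constructor
  intro U hU hUne
  obtain ⟨V, hV, rfl⟩ := isOpen_induced_iff.1 hU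
  obtain ⟨⟨x, hxB⟩, hx⟩ := hUne
  rw [comap_subtype_coe_apply hcpt.measurableSet, Subtype.image_preimage_coe]
  have hcl : x ∈ closure (interior B) := by
    rw [hconv.closure_interior_eq_closure_of_nonempty_interior hint]
    exact subset_closure hxB
  obtain ⟨y, hyV, hyB⟩ := mem_closure_iff.1 hcl V hV hx
  have : 0 < volume (V ∩ interior B) :=
    (hV.inter isOpen_interior).measure_pos _ ⟨y, hyV, hyB⟩
  refine (this.trans_le (measure_mono ?_)).ne'
  exact fun z hz => ⟨interior_subset hz.2, hz.1⟩

theorem memW12_of_locLip {Y : Type*} [MetricSpace Y] [CompactSpace Y] [MeasurableSpace Y]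
    [BorelSpace Y] {ν : Measure Y} [IsFiniteMeasure ν] {f : Y → ℝ} (hf : LocallyLipschitz f) :
    memW12Lip ν f := by
  refine ⟨hf, ?_⟩
  rw [ENNReal.add_lt_top]
  constructor
  · obtain ⟨C, hC⟩ := isCompact_univ.exists_bound_of_continuousOn
      (f := fun x => f x ^ 2) (hf.continuous.pow 2).continuousOn
    refine lt_of_le_of_lt (lintegral_mono (g := fun _ => ENNReal.ofReal C) fun x => ?_) ?_
    · exact ENNReal.ofReal_le_ofReal ((le_abs_self _).trans (hC x trivial))
    · rw [lintegral_const]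
      exact ENNReal.mul_lt_top ENNReal.ofReal_lt_top (measure_lt_top _ _)
  · have hb : ∃ C : ℝ, ∀ x ∈ (Set.univ : Set Y), localLip f x ≤ C := by
      apply isCompact_univ.induction_on (p := fun s => ∃ C : ℝ, ∀ x ∈ s, localLip f x ≤ C)
      · exact ⟨0, by simp⟩
      · rintro s t hst ⟨C, hC⟩
        exact ⟨C, fun x hx => hC x (hst hx)⟩
      · rintro s t ⟨C, hC⟩ ⟨D, hD⟩
        refine ⟨max C D, ?_⟩
        rintro x (hx | hx)
        · exact (hC x hx).trans (le_max_left _ _)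
        · exact (hD x hx).trans (le_max_right _ _)
      · intro x _
        obtain ⟨K, t, ht, hK⟩ := hf x
        refine ⟨interior t, mem_nhdsWithin_of_mem_nhds (interior_mem_nhds.2 ht), K, fun y hy => ?_⟩
        apply localLip_le K.2
        filter_upwards [mem_interior_iff_mem_nhds.1 hy] with z hz
        have := hK.dist_le_mul z hz y (interior_subset hy)
        rwa [Real.dist_eq] at this
    obtain ⟨C, hC⟩ := hb
    refine lt_of_le_of_lt (lintegral_mono (g := fun _ => ENNReal.ofReal (C ^ 2)) fun x => ?_) ?_
    · exact ENNReal.ofReal_le_ofReal (pow_le_pow_left₀ (localLip_nonneg _ _) (hC x trivial) 2)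
    · rw [lintegral_const]
      exact ENNReal.mul_lt_top ENNReal.ofReal_lt_top (measure_lt_top _ _)

theorem exists_subspace {n : ℕ} (hn : 1 ≤ n) {B : Set (EuclideanSpace ℝ (Fin n))}
    (hcpt : IsCompact B) (hint : (interior B).Nonempty) (k : ℕ) :
    ∃ F : Submodule ℝ (B → ℝ), Module.finrank ℝ F = k ∧ ∀ f ∈ F,
      memW12Lip (Measure.comap (Subtype.val : B → EuclideanSpace ℝ (Fin n)) volume) f := by
  have : CompactSpace B := isCompact_iff_compactSpace.1 hcpt
  have hfin : IsFiniteMeasure (Measure.comap (Subtype.val : B → EuclideanSpace ℝ (Fin n)) volume) := by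
    constructor
    rw [comap_subtype_coe_apply hcpt.measurableSet]
    simpa using hcpt.measure_lt_top
  let i0 : Fin n := ⟨0, hn⟩
  let Λ : Polynomial ℝ →ₗ[ℝ] (B → ℝ) :=
    { toFun := fun P x => P.eval (x.1 i0)
      map_add' := fun P Q => by ext; simp
      map_smul' := fun c P => by ext; simp }
  let Λ' := Λ ∘ₗ (Polynomial.degreeLT ℝ k).subtype
  have hinj : Function.Injective Λ' := by
    have hinj0 : Function.Injective Λ → Function.Injective Λ' := fun h P Q hPQ =>
      Subtype.ext (h hPQ)
    apply hinj0
    rw [← LinearMap.ker_eq_bot, LinearMap.ker_eq_bot']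
    intro P hP
    obtain ⟨x0, hx0⟩ := hint
    obtain ⟨ε, hε, hball⟩ := Metric.isOpen_iff.1 isOpen_interior x0 hx0
    apply Polynomial.eq_zero_of_infinite_isRoot
    refine Set.Infinite.mono ?_ (Set.Ioo_infinite (show x0 i0 < x0 i0 + ε by linarith))
    intro t ht
    let z : EuclideanSpace ℝ (Fin n) := x0 + EuclideanSpace.single i0 (t - x0 i0)
    have hz : z ∈ B := by
      apply interior_subset
      apply hball
      simp only [z, Metric.mem_ball, dist_self_add_left, EuclideanSpace.norm_single, Real.norm_eq_abs]
      rw [abs_lt]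
      constructor <;> linarith [ht.1, ht.2]
    have := congrFun hP ⟨z, hz⟩
    have hz0 : z i0 = t := by simp [z]
    change P.eval (z i0) = 0 at this
    rw [hz0] at this
    exact this
  refine ⟨LinearMap.range Λ', ?_, ?_⟩
  · rw [LinearMap.finrank_range_of_inj hinj, LinearEquiv.finrank_eq (Polynomial.degreeLTEquiv ℝ k)]
    simp
  · rintro _ ⟨P, rfl⟩
    apply memW12_of_locLip
    have h1 : LocallyLipschitz (fun t : ℝ => P.1.eval t) :=
      (Polynomial.contDiff_aeval P.1 1).locallyLipschitz
    have h2 : LipschitzWith 1 (fun x : B => x.1 i0) := by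
      apply LipschitzWith.of_dist_le_mul
      intro x y
      rw [NNReal.coe_one, one_mul, Subtype.dist_eq, Real.dist_eq, EuclideanSpace.dist_eq]
      apply Real.le_sqrt_of_sq_le
      have := Finset.single_le_sum (f := fun i => dist (x.1 i) (y.1 i) ^ 2)
        (fun i _ => sq_nonneg _) (Finset.mem_univ i0)
      simpa [Real.dist_eq] using this
    exact h1.comp h2.locallyLipschitz

theorem main_of_map {n : ℕ} (hn : 1 ≤ n) {B : Set (EuclideanSpace ℝ (Fin n))}
    (hcpt : IsCompact B) (hconv : Convex ℝ B) (hint : (interior B).Nonempty)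
    (S : EuclideanSpace ℝ (Fin n) → EuclideanSpace ℝ (Fin n)) (L : NNReal)
    (hS : LipschitzWith L S) (hL : (L : ℝ) ^ 2 ≤ 392) (hSB : ∀ x, S x ∈ B)
    (hmap : Measure.map S (stdGaussian n) = volume.restrict B) (k : ℕ) (hk : 1 ≤ k) :
    (1 / 392 : ℝ) * lambdaLip (stdGaussian n) k ≤
      lambdaLip (Measure.comap (Subtype.val : B → EuclideanSpace ℝ (Fin n)) volume) k := by
  have := openPos_subtype hcpt hconv hint
  let T : EuclideanSpace ℝ (Fin n) → B := fun x => ⟨S x, hSB x⟩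
  have hT : LipschitzWith L T := fun x y => hS x y
  refine lambda_transfer hT ⟨hT.continuous.measurable, ?_⟩ (by norm_num) hL k hk
    (exists_subspace hn hcpt hint k)
  have hemb := MeasurableEmbedding.subtype_coe hcpt.measurableSet
  have h1 : Measure.map Subtype.val (Measure.map T (stdGaussian n)) = volume.restrict B := by
    rw [Measure.map_map measurable_subtype_coe hT.continuous.measurable]
    exact hmap
  rw [← hemb.comap_map (Measure.map T (stdGaussian n)), h1]
  ext s hs
  rw [hemb.comap_apply, hemb.comap_apply, Measure.restrict_apply (hemb.measurableSet_image.2 hs),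
    Set.inter_eq_left.2]
  rintro _ ⟨x, _, rfl⟩
  exact x.2

theorem lintegral_prod_fin (n : ℕ) (f : Fin n → ℝ → ℝ≥0∞) (hf : ∀ i, Measurable (f i)) :
    ∫⁻ x : Fin n → ℝ, ∏ i, f i (x i) = ∏ i, ∫⁻ t, f i t := by
  induction n with
  | zero => simp [volume_pi]
  | succ n ih =>
    have hmp := (volume_preserving_piFinSuccAbove (fun _ : Fin (n + 1) => ℝ) 0).symm
    rw [← hmp.lintegral_comp_emb (MeasurableEquiv.measurableEmbedding _), Measure.volume_eq_prod]
    simp only [Fin.prod_univ_succ]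
    rw [← ih (fun i => f i.succ) (fun i => hf i.succ)]
    rw [← lintegral_prod_mul (hf 0).aemeasurable
      (Finset.measurable_fun_prod _ fun i _ => (hf i.succ).comp (measurable_pi_apply i)).aemeasurable]
    apply lintegral_congr
    rintro ⟨a, b⟩
    simp [MeasurableEquiv.piFinSuccAbove]

theorem pi_withDensity_fin (n : ℕ) (f : ℝ → ℝ≥0∞) (hf : Measurable f)
    [SigmaFinite (volume.withDensity f)] :
    Measure.pi (fun _ : Fin n => volume.withDensity f) =
      volume.withDensity (fun x : Fin n → ℝ => ∏ i, f (x i)) := by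
  apply Measure.pi_eq
  intro s hs
  rw [withDensity_apply _ (MeasurableSet.univ_pi hs), ← lintegral_indicator (MeasurableSet.univ_pi hs)]
  have : ∀ x : Fin n → ℝ, (Set.univ.pi s).indicator (fun x : Fin n → ℝ => ∏ i, f (x i)) x
      = ∏ i, (s i).indicator f (x i) := by
    intro x
    by_cases hx : x ∈ Set.univ.pi s
    · rw [Set.indicator_of_mem hx]
      exact Finset.prod_congr rfl fun i _ => (Set.indicator_of_mem (hx i trivial) _).symm
    · rw [Set.indicator_of_notMem hx]
      simp only [Set.mem_pi, Set.mem_univ, true_imp_iff, not_forall] at hx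
      obtain ⟨i, hi⟩ := hx
      exact (Finset.prod_eq_zero (Finset.mem_univ i) (Set.indicator_of_notMem hi _)).symm
  simp only [this]
  rw [lintegral_prod_fin n (fun i => (s i).indicator f) (fun i => hf.indicator (hs i))]
  refine Finset.prod_congr rfl fun i _ => ?_
  rw [withDensity_apply _ (hs i), lintegral_indicator (hs i)]

theorem map_1d (w w' : ℝ → ℝ) (φ g : ℝ → ℝ≥0∞) (hd : ∀ x, HasDerivAt w (w' x) x)
    (hinj : Function.Injective w) (h : ∀ x, ENNReal.ofReal |w' x| * g (w x) = φ x) :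
    Measure.map w (volume.withDensity φ) = (volume.withDensity g).restrict (Set.range w) := by
  have hw : Measurable w := Continuous.measurable
    (continuous_iff_continuousAt.2 fun x => (hd x).continuousAt)
  ext s hs
  rw [Measure.map_apply hw hs, Measure.restrict_apply hs, withDensity_apply _ (hw hs),
    withDensity_apply', ← Set.image_preimage_eq_inter_range,
    lintegral_image_eq_lintegral_abs_deriv_mul (hw hs) (fun x _ => (hd x).hasDerivWithinAt)
      hinj.injOn]
  simp only [h]

theorem gauss_1d : ProbabilityTheory.gaussianReal 0 1 = volume.withDensity
    (fun x : ℝ => ENNReal.ofReal ((√(2 * Real.pi))⁻¹ * Real.exp (-x ^ 2 / 2))) := by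
  rw [ProbabilityTheory.gaussianReal_of_var_ne_zero _ one_ne_zero]
  congr 1
  ext x
  simp [ProbabilityTheory.gaussianPDF, ProbabilityTheory.gaussianPDFReal]

theorem stdG_map (n : ℕ) : Measure.map (@WithLp.ofLp 2 (Fin n → ℝ)) (stdGaussian n) =
    Measure.pi (fun _ : Fin n => ProbabilityTheory.gaussianReal 0 1) := by
  have hmp := PiLp.volume_preserving_ofLp (Fin n)
  have hmeas : Measurable (fun x : ℝ => ENNReal.ofReal ((√(2 * Real.pi))⁻¹ * Real.exp (-x ^ 2 / 2))) := by
    fun_prop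
  have hpi : (√(2 * Real.pi))⁻¹ > 0 := by positivity
  set M0 := volume.withDensity fun x : EuclideanSpace ℝ (Fin n) =>
      ENNReal.ofReal (Real.exp (-‖x‖ ^ 2 / 2)) with hM0
  set c : ℝ≥0∞ := ENNReal.ofReal ((√(2 * Real.pi))⁻¹ ^ n) with hc
  have hc0 : c ≠ 0 := by
    rw [hc, ENNReal.ofReal_ne_zero_iff]; positivity
  have hct : c ≠ ⊤ := ENNReal.ofReal_ne_top
  have hsf : SigmaFinite (volume.withDensity (fun x : ℝ => ENNReal.ofReal ((√(2 * Real.pi))⁻¹ * Real.exp (-x ^ 2 / 2)))) := by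
    rw [← gauss_1d]; infer_instance
  have key : c • Measure.map (@WithLp.ofLp 2 (Fin n → ℝ)) M0 =
      Measure.pi (fun _ : Fin n => ProbabilityTheory.gaussianReal 0 1) := by
    rw [gauss_1d, pi_withDensity_fin n _ hmeas]
    ext s hs
    rw [Measure.smul_apply, Measure.map_apply hmp.measurable hs, hM0,
      withDensity_apply _ (hmp.measurable hs), withDensity_apply _ hs,
      ← hmp.setLIntegral_comp_preimage_emb (MeasurableEquiv.measurableEmbedding (MeasurableEquiv.toLp 2 (Fin n → ℝ)).symm), smul_eq_mul,
      ← lintegral_const_mul' _ _ hct]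
    apply lintegral_congr
    intro x
    rw [← ENNReal.ofReal_prod_of_nonneg (fun i _ => by positivity), hc, ← ENNReal.ofReal_mul (by positivity)]
    congr 1
    rw [Finset.prod_mul_distrib, ← Real.exp_sum, EuclideanSpace.norm_sq_eq]
    simp [Finset.sum_div, Finset.sum_neg_distrib, neg_div]
  have huniv : c * M0 Set.univ = 1 := by
    have := congrArg (fun m : Measure (Fin n → ℝ) => m Set.univ) key
    simpa [Measure.map_apply hmp.measurable MeasurableSet.univ] using this
  have hinv : (M0 Set.univ)⁻¹ = c := by
    rw [ENNReal.eq_inv_of_mul_eq_one_left huniv]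
  unfold stdGaussian
  rw [← hM0, hinv, Measure.map_smul, key]

noncomputable def gphi (x : ℝ) : ℝ := (√(2 * Real.pi))⁻¹ * Real.exp (-x ^ 2 / 2)

theorem gphi_pos (x : ℝ) : 0 < gphi x := by unfold gphi; positivity
theorem gphi_cont : Continuous gphi := by unfold gphi; fun_prop
theorem gphi_even (x : ℝ) : gphi (-x) = gphi x := by unfold gphi; simp
theorem gphi_integrable : Integrable gphi := by
  have := integrable_exp_neg_mul_sq (b := 1/2) (by norm_num)
  unfold gphi
  refine Integrable.const_mul (this.congr (Eventually.of_forall fun x => ?_)) _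
  dsimp only; congr 1; ring
theorem gphi_integral : ∫ x, gphi x = 1 := by
  have := integral_gaussian (1/2)
  unfold gphi
  rw [integral_const_mul]
  have h2 : ∀ x : ℝ, Real.exp (-x ^ 2 / 2) = Real.exp (-(1/2) * x ^ 2) := fun x => by congr 1; ring
  simp only [h2, this]
  rw [show Real.pi / (1/2) = 2 * Real.pi by ring, inv_mul_cancel₀]
  positivity

/-- antiderivative -/
noncomputable def cdf0 (g : ℝ → ℝ) (x : ℝ) : ℝ := ∫ t in (0:ℝ)..x, g t

structure NiceDens (g : ℝ → ℝ) : Prop where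
  pos : ∀ x, 0 < g x
  cont : Continuous g
  even : ∀ x, g (-x) = g x
  int : Integrable g
  one : ∫ x, g x = 1

theorem gphi_nice : NiceDens gphi :=
  ⟨gphi_pos, gphi_cont, gphi_even, gphi_integrable, gphi_integral⟩

namespace NiceDens
variable {g : ℝ → ℝ}

theorem hasDeriv (hg : NiceDens g) (x : ℝ) : HasDerivAt (cdf0 g) (g x) x :=
  intervalIntegral.integral_hasDerivAt_right (hg.int.intervalIntegrable)
    (hg.cont.stronglyMeasurableAtFilter _ _) hg.cont.continuousAt

theorem strictMono (hg : NiceDens g) : StrictMono (cdf0 g) :=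
  strictMono_of_deriv_pos fun x => by rw [(hg.hasDeriv x).deriv]; exact hg.pos x

theorem continuous (hg : NiceDens g) : Continuous (cdf0 g) :=
  continuous_iff_continuousAt.2 fun x => (hg.hasDeriv x).continuousAt

theorem odd (hg : NiceDens g) (x : ℝ) : cdf0 g (-x) = - cdf0 g x := by
  unfold cdf0
  have := intervalIntegral.integral_comp_neg (a := 0) (b := -x) (f := g)
  simp only [hg.even, neg_zero, neg_neg] at this
  rw [this, intervalIntegral.integral_symm]

theorem half (hg : NiceDens g) : ∫ x in Set.Ioi (0:ℝ), g x = 1 / 2 := by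
  have h1 := intervalIntegral.integral_Iic_add_Ioi (b := 0) hg.int.integrableOn hg.int.integrableOn
  have h2 := integral_comp_neg_Ioi (c := (0:ℝ)) g
  simp only [hg.even, neg_zero] at h2
  rw [hg.one] at h1
  linarith

theorem tail (hg : NiceDens g) (x : ℝ) : cdf0 g x = 1 / 2 - ∫ t in Set.Ioi x, g t := by
  have := intervalIntegral.integral_Ioi_sub_Ioi' (a := 0) (b := x) (f := g) (μ := volume) hg.int.integrableOn hg.int.integrableOn
  unfold cdf0
  rw [← this, hg.half]

theorem tendsto_top (hg : NiceDens g) : Tendsto (cdf0 g) atTop (𝓝 (1 / 2)) := by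
  have := intervalIntegral_tendsto_integral_Ioi (0:ℝ) hg.int.integrableOn tendsto_id
  rw [hg.half] at this
  exact this

theorem tendsto_bot (hg : NiceDens g) : Tendsto (cdf0 g) atBot (𝓝 (-(1 / 2))) := by
  have : Tendsto (fun x => -cdf0 g (-x)) atBot (𝓝 (-(1/2))) :=
    (hg.tendsto_top.comp tendsto_neg_atBot_atTop).neg
  simpa [hg.odd] using this

theorem lt_half (hg : NiceDens g) (x : ℝ) : cdf0 g x < 1 / 2 :=
  (hg.strictMono (lt_add_one x)).trans_le (hg.strictMono.monotone.ge_of_tendsto hg.tendsto_top _)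

theorem gt_half (hg : NiceDens g) (x : ℝ) : -(1 / 2) < cdf0 g x := by
  have := hg.lt_half (-x)
  rw [hg.odd] at this
  linarith

theorem surj (hg : NiceDens g) {y : ℝ} (h1 : -(1 / 2) < y) (h2 : y < 1 / 2) : ∃ x, cdf0 g x = y := by
  obtain ⟨a, ha⟩ := (hg.tendsto_bot.eventually (gt_mem_nhds h1)).exists
  obtain ⟨b, hb⟩ := (hg.tendsto_top.eventually (lt_mem_nhds h2)).exists
  have := mem_range_of_exists_le_of_exists_ge hg.continuous ⟨a, ha.le⟩ ⟨b, hb.le⟩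
  exact this

theorem exists_transport (hg : NiceDens g) : ∃ w : ℝ → ℝ, (∀ x, cdf0 g (w x) = cdf0 gphi x) ∧
    StrictMono w ∧ (∀ x, w (-x) = - w x) ∧ (∀ x, HasDerivAt w (gphi x / g (w x)) x) ∧
    Measure.map w (ProbabilityTheory.gaussianReal 0 1) =
      volume.withDensity (fun x => ENNReal.ofReal (g x)) := by
  choose w hw using fun x => hg.surj (gphi_nice.gt_half x) (gphi_nice.lt_half x)
  have hmono : StrictMono w := by
    intro x y hxy
    rw [← hg.strictMono.lt_iff_lt, hw, hw]
    exact gphi_nice.strictMono hxy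
  have hsurj : Function.Surjective w := by
    intro y
    obtain ⟨x, hx⟩ := gphi_nice.surj (hg.gt_half y) (hg.lt_half y)
    exact ⟨x, hg.strictMono.injective (by rw [hw, hx])⟩
  have hcont : Continuous w := hmono.monotone.continuous_of_surjective hsurj
  have hd : ∀ x, HasDerivAt w (gphi x / g (w x)) x := by
    intro x
    obtain ⟨v, hv⟩ : ∃ v : ℝ → ℝ, v = fun y => w y := ⟨_, rfl⟩
    -- slope argument through the strictly monotone inverse
    have hG := hg.hasDeriv (w x)
    have hP := gphi_nice.hasDeriv x
    rw [hasDerivAt_iff_tendsto_slope] at hG hP ⊢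
    have hwt : Tendsto w (𝓝[≠] x) (𝓝[≠] (w x)) := by
      rw [tendsto_nhdsWithin_iff]
      refine ⟨(hcont.tendsto x).mono_left nhdsWithin_le_nhds, ?_⟩
      filter_upwards [self_mem_nhdsWithin] with y hy
      exact fun h => hy (hmono.injective h)
    have h1 := hP.div (hG.comp hwt) (hg.pos _).ne'
    refine h1.congr' ?_
    filter_upwards [self_mem_nhdsWithin] with y hy
    have hyx : y - x ≠ 0 := sub_ne_zero.2 hy
    have hwy : w y - w x ≠ 0 := sub_ne_zero.2 fun h => hy (hmono.injective h)
    have hcy : cdf0 gphi y - cdf0 gphi x ≠ 0 :=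
      sub_ne_zero.2 fun h => hy (gphi_nice.strictMono.injective h)
    simp only [Pi.div_apply, Function.comp, slope_def_field, hw]
    field_simp
  refine ⟨w, hw, hmono, ?_, hd, ?_⟩
  · intro x
    apply hg.strictMono.injective
    rw [hw, hg.odd, hw, gphi_nice.odd]
  · rw [gauss_1d]
    have := map_1d w (fun x => gphi x / g (w x)) (fun x => ENNReal.ofReal (gphi x))
      (fun x => ENNReal.ofReal (g x)) hd hmono.injective (by
        intro x
        have h1 := gphi_pos x
        have h2 := hg.pos (w x)
        rw [← ENNReal.ofReal_mul (abs_nonneg _), abs_of_pos (div_pos h1 h2), div_mul_cancel₀ _ h2.ne'])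
    rw [hsurj.range_eq, Measure.restrict_univ] at this
    exact this

end NiceDens

/-- p = ∞ one-dimensional map -/
theorem map_cdf_gauss : Measure.map (cdf0 gphi) (ProbabilityTheory.gaussianReal 0 1) =
    volume.restrict (Set.Icc (-(1/2)) (1/2)) := by
  have h1 := map_1d (cdf0 gphi) gphi (fun x => ENNReal.ofReal (gphi x)) (fun _ => 1)
    gphi_nice.hasDeriv gphi_nice.strictMono.injective (by
      intro x; rw [abs_of_pos (gphi_pos x), mul_one])
  have h2 : Measure.map (cdf0 gphi) (ProbabilityTheory.gaussianReal 0 1) = volume.restrict (Set.range (cdf0 gphi)) := by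
    rw [gauss_1d]
    refine Eq.trans h1 ?_
    congr 1
    exact withDensity_one
  have : IsProbabilityMeasure (Measure.map (cdf0 gphi) (ProbabilityTheory.gaussianReal 0 1)) :=
    Measure.isProbabilityMeasure_map gphi_nice.continuous.measurable.aemeasurable
  have : IsProbabilityMeasure (volume.restrict (Set.Icc (-(1/2) : ℝ) (1/2))) :=
    ⟨by rw [Measure.restrict_apply_univ, Real.volume_Icc]; norm_num⟩
  apply Measure.eq_of_le_of_isProbabilityMeasure
  rw [h2]
  apply Measure.restrict_mono_set
  rintro _ ⟨x, rfl⟩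
  exact ⟨(gphi_nice.gt_half x).le, (gphi_nice.lt_half x).le⟩

theorem nonneg_of_deriv_nonpos {a : ℝ} {E E' : ℝ → ℝ} (hd : ∀ x, a ≤ x → HasDerivAt E (E' x) x)
    (hE : ∀ x, a ≤ x → E' x ≤ 0) (hl : Tendsto E atTop (𝓝 0)) : 0 ≤ E a := by
  have hanti : AntitoneOn E (Set.Ici a) := by
    apply antitoneOn_of_deriv_nonpos (convex_Ici a)
    · exact fun x hx => (hd x hx).continuousAt.continuousWithinAt
    · intro x hx
      rw [interior_Ici] at hx
      exact (hd x (le_of_lt hx)).differentiableAt.differentiableWithinAt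
    · intro x hx
      rw [interior_Ici] at hx
      rw [(hd x (le_of_lt hx)).deriv]
      exact hE x (le_of_lt hx)
  apply le_of_tendsto hl
  filter_upwards [eventually_ge_atTop a] with x hx
  exact hanti Set.self_mem_Ici hx hx

/-- tail -/
noncomputable def tl (g : ℝ → ℝ) (x : ℝ) : ℝ := 1 / 2 - cdf0 g x

theorem tl_deriv {g : ℝ → ℝ} (hg : NiceDens g) (x : ℝ) : HasDerivAt (tl g) (-g x) x := by
  exact (hg.hasDeriv x).const_sub (1/2)

theorem tl_tendsto {g : ℝ → ℝ} (hg : NiceDens g) : Tendsto (tl g) atTop (𝓝 0) := by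
  have := hg.tendsto_top.const_sub (1/2)
  rw [sub_self] at this
  exact this

theorem tl_pos {g : ℝ → ℝ} (hg : NiceDens g) (x : ℝ) : 0 < tl g x := by
  have := hg.lt_half x
  unfold tl; linarith

theorem gphi_deriv (x : ℝ) : HasDerivAt gphi (-x * gphi x) x := by
  unfold gphi
  have h1 : HasDerivAt (fun x : ℝ => -x ^ 2 / 2) (-x) x := by
    have := ((hasDerivAt_pow 2 x).neg).div_const 2
    convert! this using 1
    simp
    ring
  convert! (h1.exp.const_mul (√(2 * Real.pi))⁻¹) using 1
  ring

theorem gphi_tendsto : Tendsto gphi atTop (𝓝 0) := by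
  unfold gphi
  have : Tendsto (fun x : ℝ => Real.exp (-x ^ 2 / 2)) atTop (𝓝 0) := by
    apply Real.tendsto_exp_atBot.comp
    have h := (tendsto_pow_atTop (α := ℝ) (n := 2) two_ne_zero).atTop_div_const (r := 2) (by norm_num)
    have := tendsto_neg_atTop_atBot.comp h
    refine this.congr fun x => ?_
    simp [neg_div]
  simpa using this.const_mul (√(2 * Real.pi))⁻¹

theorem mills_lower {x : ℝ} (hx : 0 ≤ x) : gphi x ≤ (x + 1) * tl gphi x := by
  have h := nonneg_of_deriv_nonpos (a := x) (E := fun x => tl gphi x - gphi x / (x + 1))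
    (E' := fun x => -gphi x - ((-x * gphi x) * (x + 1) - gphi x * 1) / (x + 1) ^ 2) ?_ ?_ ?_
  · have h0 : gphi x / (x + 1) ≤ tl gphi x := by linarith
    rw [div_le_iff₀ (by linarith)] at h0
    linarith
  · intro y hy
    exact (tl_deriv gphi_nice y).sub ((gphi_deriv y).div ((hasDerivAt_id y).add_const 1) (by dsimp; linarith))
  · intro y hy
    have hy0 : 0 ≤ y := hx.trans hy
    have hp := gphi_pos y
    have : -gphi y - ((-y * gphi y) * (y + 1) - gphi y * 1) / (y + 1) ^ 2 = -(gphi y * y / (y + 1) ^ 2) := by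
      field_simp; ring
    rw [this]
    have : 0 ≤ gphi y * y / (y + 1) ^ 2 := by positivity
    linarith
  · have h2 : Tendsto (fun x : ℝ => gphi x / (x + 1)) atTop (𝓝 0) :=
      gphi_tendsto.div_atTop (tendsto_atTop_add_const_right _ _ tendsto_id)
    simpa using (tl_tendsto gphi_nice).sub h2

theorem mills_upper {x : ℝ} (hx : 0 ≤ x) : tl gphi x ≤ Real.exp (-x ^ 2 / 2) := by
  have h1 : tl gphi x = ∫ t in Set.Ioi x, gphi t := by
    unfold tl; rw [gphi_nice.tail]; ring
  have hi : Integrable (fun t => Real.exp (-x ^ 2 / 2) * gphi (t - x)) :=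
    (gphi_integrable.comp_sub_right x).const_mul _
  rw [h1]
  calc _ ≤ ∫ t in Set.Ioi x, Real.exp (-x ^ 2 / 2) * gphi (t - x) := by
        apply setIntegral_mono_on gphi_integrable.integrableOn hi.integrableOn measurableSet_Ioi
        intro t ht
        have ht : x < t := ht
        unfold gphi
        rw [mul_left_comm, ← Real.exp_add]
        apply mul_le_mul_of_nonneg_left _ (by positivity)
        apply Real.exp_le_exp.2
        nlinarith
    _ ≤ ∫ t, Real.exp (-x ^ 2 / 2) * gphi (t - x) :=
        setIntegral_le_integral hi (Eventually.of_forall fun t => by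
          have := gphi_pos (t - x); dsimp; positivity)
    _ = _ := by
        rw [integral_const_mul, integral_sub_right_eq_self (fun t => gphi t), gphi_integral, mul_one]

theorem gphi_le (x : ℝ) : gphi x ≤ 2 / 5 * Real.exp (-x ^ 2 / 2) := by
  unfold gphi
  apply mul_le_mul_of_nonneg_right _ (Real.exp_pos _).le
  rw [inv_le_comm₀ (by positivity) (by norm_num)]
  apply Real.le_sqrt_of_sq_le
  have := Real.pi_gt_d2
  norm_num
  linarith

theorem gphi_sq_le {x : ℝ} (hx : 0 ≤ x) : gphi x ^ 2 ≤ tl gphi x := by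
  have h1 := mills_lower hx
  have h2 : gphi x * (x + 1) ≤ 1 := by
    have h3 := gphi_le x
    have h4 : Real.exp (-x ^ 2 / 2) * (1 + x ^ 2 / 2) ≤ 1 := by
      have h5 := Real.add_one_le_exp (x ^ 2 / 2)
      have h6 : Real.exp (-x ^ 2 / 2) * Real.exp (x ^ 2 / 2) = 1 := by
        rw [← Real.exp_add]; simp [neg_div]
      nlinarith [Real.exp_pos (-x ^ 2 / 2)]
    have h7 : (x + 1) ≤ 2 * (1 + x ^ 2 / 2) := by nlinarith [sq_nonneg (x - 1)]
    have h8 := gphi_pos x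
    have h9 := Real.exp_pos (-x ^ 2 / 2)
    calc gphi x * (x + 1) ≤ (2 / 5 * Real.exp (-x ^ 2 / 2)) * (2 * (1 + x ^ 2 / 2)) := by gcongr
      _ ≤ 1 := by nlinarith
  have hp := gphi_pos x
  have ht := tl_pos gphi_nice x
  calc gphi x ^ 2 = gphi x * gphi x := sq _
    _ ≤ gphi x * ((x + 1) * tl gphi x) := by gcongr
    _ = (gphi x * (x + 1)) * tl gphi x := by ring
    _ ≤ 1 * tl gphi x := by gcongr
    _ = _ := one_mul _

noncomputable def Zp (p : ℝ) : ℝ := 2 * Real.Gamma (1 / p + 1)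
noncomputable def gp (p : ℝ) (y : ℝ) : ℝ := (Zp p)⁻¹ * Real.exp (-|y| ^ p)

theorem Zp_pos {p : ℝ} (hp : 2 ≤ p) : 0 < Zp p := by
  unfold Zp
  have : 0 < 1 / p + 1 := by positivity
  have := Real.Gamma_pos_of_pos this
  positivity

theorem Zp_le {p : ℝ} (hp : 2 ≤ p) : Zp p ≤ 2 := by
  unfold Zp
  have h := Real.convexOn_Gamma.2 (show (1:ℝ) ∈ Set.Ioi 0 by simp) (show (2:ℝ) ∈ Set.Ioi 0 by simp)
    (show 0 ≤ 1 - 1 / p by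
      have : 1 / p ≤ 1 := by rw [div_le_one (by linarith)]; linarith
      linarith) (show 0 ≤ 1 / p by positivity) (by ring)
  simp only [smul_eq_mul, Real.Gamma_one, Real.Gamma_two] at h
  rw [show (1 - 1 / p) * 1 + 1 / p * 2 = 1 / p + 1 by ring] at h
  linarith

theorem gp_nice {p : ℝ} (hp : 2 ≤ p) : NiceDens (gp p) := by
  have hZ := Zp_pos hp
  have hone : ∫ y, gp p y = 1 := by
    have h1 := integral_comp_abs (f := fun t => (Zp p)⁻¹ * Real.exp (-t ^ p))
    unfold gp
    rw [h1, integral_const_mul, integral_exp_neg_rpow (by linarith)]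
    rw [← mul_assoc, mul_comm 2, mul_assoc]
    exact inv_mul_cancel₀ hZ.ne'
  refine ⟨fun y => by unfold gp; positivity, ?_, fun y => by unfold gp; simp,
    integrable_of_integral_eq_one hone, hone⟩
  unfold gp
  exact continuous_const.mul (Real.continuous_exp.comp
    ((continuous_abs.rpow_const fun x => Or.inr (by linarith)).neg))

theorem gp_of_nonneg {p y : ℝ} (hy : 0 ≤ y) : gp p y = (Zp p)⁻¹ * Real.exp (-y ^ p) := by
  rw [gp, abs_of_nonneg hy]

theorem gp_le {p : ℝ} (hp : 2 ≤ p) (y : ℝ) : gp p y ≤ (Zp p)⁻¹ := by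
  have hZ := Zp_pos hp
  unfold gp
  apply mul_le_of_le_one_right (by positivity)
  rw [Real.exp_le_one_iff]
  have : 0 ≤ |y| ^ p := by positivity
  linarith

theorem gp_anti {p : ℝ} (hp : 2 ≤ p) {x y : ℝ} (hx : 0 ≤ x) (hxy : x ≤ y) : gp p y ≤ gp p x := by
  have hZ := Zp_pos hp
  rw [gp_of_nonneg hx, gp_of_nonneg (hx.trans hxy)]
  apply mul_le_mul_of_nonneg_left _ (by positivity)
  apply Real.exp_le_exp.2
  have := Real.rpow_le_rpow hx hxy (by linarith : 0 ≤ p)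
  linarith

theorem gp_deriv {p : ℝ} (hp : 2 ≤ p) {y : ℝ} (hy : 0 < y) :
    HasDerivAt (gp p) (-(p * y ^ (p - 1)) * gp p y) y := by
  have h1 : HasDerivAt (fun y : ℝ => (Zp p)⁻¹ * Real.exp (-y ^ p)) (-(p * y ^ (p - 1)) * gp p y) y := by
    have := ((Real.hasDerivAt_rpow_const (x := y) (p := p) (Or.inl hy.ne')).neg.exp).const_mul (Zp p)⁻¹
    convert! this using 1
    rw [gp_of_nonneg hy.le]
    simp only [Pi.neg_apply]
    ring
  refine h1.congr_of_eventuallyEq ?_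
  filter_upwards [lt_mem_nhds hy] with z hz
  exact gp_of_nonneg hz.le

theorem cdf_upper {p : ℝ} (hp : 2 ≤ p) {x y : ℝ} (hxy : x ≤ y) :
    cdf0 (gp p) y - cdf0 (gp p) x ≤ (Zp p)⁻¹ * (y - x) := by
  apply image_sub_le_mul_sub_of_deriv_le (fun z => ((gp_nice hp).hasDeriv z).differentiableAt) _ hxy
  intro z
  rw [((gp_nice hp).hasDeriv z).deriv]
  exact gp_le hp z

theorem cdf_lower {p : ℝ} (hp : 2 ≤ p) {x y : ℝ} (hx : 0 ≤ x) (hxy : x ≤ y) :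
    gp p y * (y - x) ≤ cdf0 (gp p) y - cdf0 (gp p) x := by
  apply (convex_Icc x y).mul_sub_le_image_sub_of_le_deriv
    ((gp_nice hp).continuous.continuousOn)
    (fun z _ => ((gp_nice hp).hasDeriv z).differentiableAt.differentiableWithinAt) _
    x ⟨le_rfl, hxy⟩ y ⟨hxy, le_rfl⟩ hxy
  intro z hz
  rw [interior_Icc] at hz
  rw [((gp_nice hp).hasDeriv z).deriv]
  exact gp_anti hp (hx.trans hz.1.le) hz.2.le

theorem Zp_ge {p : ℝ} (hp : 2 ≤ p) : 2 * Real.exp (-1) ≤ Zp p := by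
  have h1 := cdf_lower hp (x := 0) (y := 1) le_rfl zero_le_one
  have h2 := (gp_nice hp).lt_half 1
  have h3 : cdf0 (gp p) 0 = 0 := by simp [cdf0]
  rw [gp_of_nonneg zero_le_one, h3] at h1
  simp only [Real.one_rpow, sub_zero, mul_one] at h1
  have hZ := Zp_pos hp
  have : (Zp p)⁻¹ * Real.exp (-1) ≤ 1 / 2 := by linarith
  rw [inv_mul_le_iff₀ hZ] at this
  linarith

theorem J1 {p y : ℝ} (hp : 2 ≤ p) (hy : 0 < y) : p * y ^ (p - 1) * tl (gp p) y ≤ gp p y := by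
  have hp0 : 0 < p := by linarith
  have h := nonneg_of_deriv_nonpos (a := y) (E := fun z => gp p z / (p * y ^ (p - 1)) - tl (gp p) z)
    (E' := fun z => (-(p * z ^ (p - 1)) * gp p z) / (p * y ^ (p - 1)) - (-gp p z)) ?_ ?_ ?_
  · have hpos : 0 < p * y ^ (p - 1) := by positivity
    have h0 : tl (gp p) y ≤ gp p y / (p * y ^ (p - 1)) := by linarith
    rw [le_div_iff₀ hpos] at h0
    linarith
  · intro z hz
    exact ((gp_deriv hp (hy.trans_le hz)).div_const _).sub (tl_deriv (gp_nice hp) z)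
  · intro z hz
    have hpos : 0 < p * y ^ (p - 1) := by positivity
    have h1 : p * y ^ (p - 1) ≤ p * z ^ (p - 1) :=
      mul_le_mul_of_nonneg_left (Real.rpow_le_rpow hy.le hz (by linarith)) hp0.le
    have h2 := (gp_nice hp).pos z
    rw [sub_neg_eq_add, neg_mul, neg_div]
    have : gp p z ≤ p * z ^ (p - 1) * gp p z / (p * y ^ (p - 1)) := by
      rw [le_div_iff₀ hpos]
      nlinarith
    linarith
  · have h2 : Tendsto (gp p) atTop (𝓝 0) := by
      have h3 : Tendsto (fun y : ℝ => (Zp p)⁻¹ * Real.exp (-y ^ p)) atTop (𝓝 ((Zp p)⁻¹ * 0)) := by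
        apply Filter.Tendsto.const_mul
        apply Real.tendsto_exp_atBot.comp
        exact tendsto_neg_atTop_atBot.comp (tendsto_rpow_atTop hp0)
      rw [mul_zero] at h3
      refine h3.congr' ?_
      filter_upwards [eventually_ge_atTop 0] with z hz
      rw [gp_of_nonneg hz]
    simpa using (h2.div_const (p * y ^ (p - 1))).sub (tl_tendsto (gp_nice hp))

theorem J2 {p y : ℝ} (hp : 2 ≤ p) (hy1 : y ≤ 1) : Zp p * tl (gp p) y ≤ (1 - y) + 1 / p := by
  have hZ := Zp_pos hp
  have h1 := cdf_upper hp hy1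
  have h2 := J1 hp zero_lt_one
  have h3 := gp_le hp 1
  simp only [Real.one_rpow, mul_one] at h2
  have h4 : tl (gp p) y = tl (gp p) 1 + (cdf0 (gp p) 1 - cdf0 (gp p) y) := by unfold tl; ring
  have h5 : tl (gp p) 1 ≤ (Zp p)⁻¹ / p := by
    rw [le_div_iff₀ (by linarith)]; linarith
  have h6 : tl (gp p) y ≤ (Zp p)⁻¹ / p + (Zp p)⁻¹ * (1 - y) := by linarith
  calc Zp p * tl (gp p) y ≤ Zp p * ((Zp p)⁻¹ / p + (Zp p)⁻¹ * (1 - y)) := by gcongr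
    _ = _ := by field_simp; ring

theorem J3 {p y : ℝ} (hp : 2 ≤ p) (hy : 1 ≤ y) :
    (Zp p * p)⁻¹ * Real.exp (-(3 * y ^ p)) ≤ tl (gp p) y := by
  have hZ := Zp_pos hp
  have hp0 : 0 < p := by linarith
  have hy0 : 0 < y := by linarith
  have h1 := cdf_lower hp hy0.le (y := y * (1 + 1 / p)) (by
    have : 0 < y * (1 / p) := by positivity
    linarith)
  have h2 := (gp_nice hp).lt_half (y * (1 + 1 / p))
  have h3 : gp p (y * (1 + 1 / p)) * (y * (1 + 1 / p) - y) ≤ tl (gp p) y := by unfold tl; linarith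
  refine le_trans ?_ h3
  rw [gp_of_nonneg (by positivity)]
  have h4 : (y * (1 + 1 / p)) ^ p ≤ 3 * y ^ p := by
    rw [Real.mul_rpow hy0.le (by positivity)]
    have h5 : (1 + 1 / p) ^ p ≤ Real.exp 1 := by
      calc (1 + 1 / p) ^ p ≤ (Real.exp (1 / p)) ^ p := by
            apply Real.rpow_le_rpow (by positivity) _ hp0.le
            have := Real.add_one_le_exp (1 / p); linarith
        _ = _ := by rw [← Real.exp_mul]; congr 1; field_simp
    have h6 := Real.exp_one_lt_d9
    have h7 : 0 < y ^ p := by positivity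
    nlinarith
  have h5 : Real.exp (-(3 * y ^ p)) ≤ Real.exp (-(y * (1 + 1 / p)) ^ p) := Real.exp_le_exp.2 (by linarith)
  have h6 : (Zp p * p)⁻¹ ≤ (Zp p)⁻¹ * (y * (1 + 1 / p) - y) := by
    rw [mul_inv]
    apply mul_le_mul_of_nonneg_left _ (by positivity)
    have : y * (1 + 1 / p) - y = y * p⁻¹ := by field_simp; ring
    rw [this]
    have : 0 < p⁻¹ := by positivity
    nlinarith
  calc (Zp p * p)⁻¹ * Real.exp (-(3 * y ^ p))
      ≤ ((Zp p)⁻¹ * (y * (1 + 1 / p) - y)) * Real.exp (-(y * (1 + 1 / p)) ^ p) := by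
        gcongr
        exact le_trans (by positivity) h6
    _ = _ := by ring

theorem x_bound {p x y : ℝ} (hp : 2 ≤ p) (hx : 0 < x) (hy : 1 ≤ y) (h : tl gphi x = tl (gp p) y) :
    x ^ 2 ≤ 7 * p * y ^ p := by
  have hZ := Zp_pos hp
  have h1 := J3 hp hy
  have h2 := mills_upper hx.le
  have h3 : (Zp p * p)⁻¹ * Real.exp (-(3 * y ^ p)) ≤ Real.exp (-x ^ 2 / 2) := by linarith
  rw [inv_mul_le_iff₀ (by positivity)] at h3
  have h4 : Zp p * p ≤ Real.exp (2 * p) := by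
    have h5 := Real.add_one_le_exp (2 * p)
    have h6 := Zp_le hp
    nlinarith
  have h5 : Real.exp (-(3 * y ^ p)) ≤ Real.exp (2 * p + -x ^ 2 / 2) := by
    rw [Real.exp_add]
    refine h3.trans ?_
    gcongr
  have h6 := Real.exp_le_exp.1 h5
  have h7 : 1 ≤ y ^ p := Real.one_le_rpow hy (by linarith)
  nlinarith

theorem bern {q y : ℝ} (hq : 0 ≤ q) (hy : 0 < y) (hy1 : y ≤ 1) : (q + 1) * (y ^ q * (1 - y)) ≤ 1 := by
  have h1 : y ^ q ≤ Real.exp (-(q * (1 - y))) := by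
    calc y ^ q ≤ (Real.exp (-(1 - y))) ^ q := by
          apply Real.rpow_le_rpow hy.le _ hq
          have := Real.add_one_le_exp (-(1 - y)); linarith
      _ = _ := by rw [← Real.exp_mul]; congr 1; ring
  have h2 := Real.add_one_le_exp (q * (1 - y))
  have h3 : Real.exp (-(q * (1 - y))) * Real.exp (q * (1 - y)) = 1 := by rw [← Real.exp_add]; simp
  have h4 : (q + 1) * (1 - y) ≤ Real.exp (q * (1 - y)) := by linarith
  calc (q + 1) * (y ^ q * (1 - y)) = y ^ q * ((q + 1) * (1 - y)) := by ring
    _ ≤ Real.exp (-(q * (1 - y))) * Real.exp (q * (1 - y)) := by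
        have : 0 ≤ 1 - y := by linarith
        gcongr
    _ = 1 := h3

theorem w_bounds {p x y : ℝ} (hp : 2 ≤ p) (hx : 0 < x) (hy : 0 < y) (h : tl gphi x = tl (gp p) y) :
    gphi x / gp p y ≤ 3 ∧ √p * (y ^ (p / 2 - 1) * (gphi x / gp p y)) ≤ 7 := by
  have hZ := Zp_pos hp
  have hp0 : 0 < p := by linarith
  have hg := (gp_nice hp).pos y
  have hph := gphi_pos x
  have hs : √p * √p = p := Real.mul_self_sqrt hp0.le
  have hs0 : 0 < √p := Real.sqrt_pos.2 hp0
  have hs1 : 1.4 ≤ √p := by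
    apply Real.le_sqrt_of_sq_le; norm_num; linarith
  set W := gphi x / gp p y with hW
  have hW0 : 0 < W := by positivity
  set D := y ^ (p / 2 - 1) with hD
  have hD0 : 0 < D := by positivity
  rcases le_total 1 y with hy1 | hy1
  · have hxb := x_bound hp hx hy1 h
    set a := y ^ (p / 2) with ha
    have ha1 : 1 ≤ a := Real.one_le_rpow hy1 (by linarith)
    have haa : y ^ p = a * a := by rw [ha, ← Real.rpow_add hy]; congr 1; ring
    have hDa : a = D * y := by
      rw [ha, hD]; nth_rewrite 3 [← Real.rpow_one y]; rw [← Real.rpow_add hy]; congr 1; ring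
    have hDD : y ^ (p - 1) = a * D := by rw [ha, hD, ← Real.rpow_add hy]; congr 1; ring
    have hD1 : 1 ≤ D := Real.one_le_rpow hy1 (by linarith)
    have hxs : x ≤ 2.65 * (√p * a) := by
      apply le_of_sq_le_sq _ (by positivity)
      have : (2.65 * (√p * a)) ^ 2 = 2.65 ^ 2 * ((√p * √p) * (a * a)) := by ring
      rw [this, hs, ← haa]
      have : 0 < p * y ^ p := by positivity
      nlinarith
    have hx1 : x + 1 ≤ 3.4 * (√p * a) := by nlinarith
    have h1 := mills_lower hx.le
    have h2 := J1 hp hy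
    rw [← h, hDD] at h2
    have ht := tl_pos gphi_nice x
    have h3 : √p * (D * W) ≤ 3.4 := by
      have h4 : W * (p * (a * D)) ≤ x + 1 := by
        have : W * gp p y = gphi x := by rw [hW]; field_simp
        have h5 : W * (p * (a * D) * tl gphi x) ≤ (x + 1) * tl gphi x := by
          calc _ ≤ W * gp p y := by gcongr
            _ ≤ _ := by rw [this]; exact h1
        rw [← mul_assoc] at h5
        exact le_of_mul_le_mul_right h5 ht
      have h5 : (√p * (D * W)) * (√p * a) ≤ 3.4 * (√p * a) := by
        calc _ = W * ((√p * √p) * (a * D)) := by ring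
          _ ≤ _ := by rw [hs]; linarith
      exact le_of_mul_le_mul_right h5 (by positivity)
    constructor
    · have : 1.4 * (1 * W) ≤ √p * (D * W) := by gcongr
      linarith
    · linarith
  · have he := Real.exp_one_lt_d9
    have hgl : (Zp p)⁻¹ * Real.exp (-1) ≤ gp p y := by
      rw [gp_of_nonneg hy.le]
      have : y ^ p ≤ 1 := Real.rpow_le_one hy.le hy1 hp0.le
      gcongr
    have hgW : W ≤ gphi x * (Zp p * Real.exp 1) := by
      rw [hW, div_le_iff₀ hg]
      have h1 : (Zp p * Real.exp 1) * ((Zp p)⁻¹ * Real.exp (-1)) = 1 := by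
        rw [Real.exp_neg]; field_simp
      have h2 : (Zp p * Real.exp 1) * ((Zp p)⁻¹ * Real.exp (-1)) ≤ (Zp p * Real.exp 1) * gp p y := by gcongr
      nlinarith
    have hZ2 := Zp_le hp
    constructor
    · have h1 := gphi_le x
      have h2 : Real.exp (-x ^ 2 / 2) ≤ 1 := by
        rw [Real.exp_le_one_iff]; nlinarith
      calc W ≤ gphi x * (Zp p * Real.exp 1) := hgW
        _ ≤ 2 / 5 * (2 * 2.7182818286) := by
          gcongr
          linarith
        _ ≤ 3 := by norm_num
    · apply le_of_sq_le_sq _ (by norm_num)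
      have hDq : D ^ 2 = y ^ (p - 2) := by
        rw [sq, hD, ← Real.rpow_add hy]; congr 1; ring
      have hb := bern (q := p - 2) (by linarith) hy hy1
      have hy2 : y ^ (p - 2) ≤ 1 := Real.rpow_le_one hy.le hy1 (by linarith)
      have hy20 : 0 < y ^ (p - 2) := by positivity
      have h1 := gphi_sq_le hx.le
      have h2 := J2 hp hy1
      rw [← h] at h2
      have h3 : Zp p * gphi x ^ 2 ≤ (1 - y) + 1 / p := le_trans (by gcongr) h2
      have hW2 : W ^ 2 ≤ (2 * Real.exp 1 ^ 2) * ((1 - y) + 1 / p) := by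
        calc W ^ 2 ≤ (gphi x * (Zp p * Real.exp 1)) ^ 2 := by gcongr
          _ = (Zp p * Real.exp 1 ^ 2) * (Zp p * gphi x ^ 2) := by ring
          _ ≤ _ := by gcongr
      have h4 : p * (y ^ (p - 2) * ((1 - y) + 1 / p)) ≤ 3 := by
        have : p * (y ^ (p - 2) * ((1 - y) + 1 / p)) = p * (y ^ (p - 2) * (1 - y)) + y ^ (p - 2) := by
          field_simp
        rw [this]
        have h5 : 0 ≤ y ^ (p - 2) * (1 - y) := mul_nonneg hy20.le (by linarith)
        nlinarith
      calc (√p * (D * W)) ^ 2 = (√p * √p) * (D ^ 2 * W ^ 2) := by ring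
        _ ≤ p * (y ^ (p - 2) * ((2 * Real.exp 1 ^ 2) * ((1 - y) + 1 / p))) := by
            rw [hs, hDq]; gcongr
        _ = (2 * Real.exp 1 ^ 2) * (p * (y ^ (p - 2) * ((1 - y) + 1 / p))) := by ring
        _ ≤ (2 * 2.7182818286 ^ 2) * 3 := by gcongr
        _ ≤ 7 ^ 2 := by norm_num

theorem exists_w {p : ℝ} (hp : 2 ≤ p) : ∃ w : ℝ → ℝ, Continuous w ∧
    Measure.map w (ProbabilityTheory.gaussianReal 0 1) = volume.withDensity (fun x => ENNReal.ofReal (gp p x)) ∧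
    (∀ x x', |w x - w x'| ≤ 3 * |x - x'|) ∧
    (∀ x x', |(|w x| ^ (p / 2) - |w x'| ^ (p / 2))| ≤ (7 / 2 * √p) * |x - x'|) := by
  obtain ⟨w, hc, hmono, hodd, hder, hmap⟩ := (gp_nice hp).exists_transport
  have hp0 : 0 < p := by linarith
  have hcont : Continuous w := continuous_iff_continuousAt.2 fun x => (hder x).continuousAt
  have hw0 : w 0 = 0 := by have := hodd 0; rw [neg_zero] at this; linarith
  have hwpos : ∀ x, 0 < x → 0 < w x := fun x hx => by rw [← hw0]; exact hmono hx
  have hwnn : ∀ x, 0 ≤ x → 0 ≤ w x := fun x hx => by rw [← hw0]; exact hmono.monotone hx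
  have hb : ∀ x, 0 < x → gphi x / gp p (w x) ≤ 3 ∧
      √p * ((w x) ^ (p / 2 - 1) * (gphi x / gp p (w x))) ≤ 7 := fun x hx =>
    w_bounds hp hx (hwpos x hx) (by unfold tl; rw [hc])
  have habs : ∀ x, |w x| = w |x| := by
    intro x
    rcases le_total 0 x with h | h
    · rw [abs_of_nonneg h, abs_of_nonneg (hwnn x h)]
    · have h1 : 0 ≤ w (-x) := hwnn _ (by linarith)
      rw [abs_of_nonpos h, hodd, abs_of_nonpos]
      rw [hodd] at h1; linarith
  -- one-sided bounds
  have hs0 : 0 < √p := Real.sqrt_pos.2 hp0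
  have hA : ∀ x y, 0 ≤ x → x ≤ y → w y - w x ≤ 3 * (y - x) := by
    intro x y hx hxy
    apply (convex_Ici (0:ℝ)).image_sub_le_mul_sub_of_deriv_le hcont.continuousOn
      (fun z _ => (hder z).differentiableAt.differentiableWithinAt) _ x hx y (hx.trans hxy) hxy
    intro z hz
    rw [interior_Ici] at hz
    rw [(hder z).deriv]
    exact (hb z hz).1
  have hB : ∀ x y, 0 ≤ x → x ≤ y → (w y) ^ (p / 2) - (w x) ^ (p / 2) ≤ (7 / 2 * √p) * (y - x) := by
    intro x y hx hxy
    have hd : ∀ z, 0 < z → HasDerivAt (fun z => (w z) ^ (p / 2))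
        ((gphi z / gp p (w z)) * (p / 2) * (w z) ^ (p / 2 - 1)) z := fun z hz =>
      (hder z).rpow_const (Or.inl (hwpos z hz).ne')
    refine (convex_Ici (0:ℝ)).image_sub_le_mul_sub_of_deriv_le (f := fun z => (w z) ^ (p / 2))
      (hcont.rpow_const fun _ => Or.inr (by linarith)).continuousOn
      (fun z hz => ?_) ?_ x hx y (hx.trans hxy) hxy
    · rw [interior_Ici] at hz
      exact (hd z hz).differentiableAt.differentiableWithinAt
    intro z hz
    rw [interior_Ici] at hz
    rw [(hd z hz).deriv]
    have h1 := (hb z hz).2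
    have hs : √p * √p = p := Real.mul_self_sqrt hp0.le
    calc _ = √p / 2 * (√p * ((w z) ^ (p / 2 - 1) * (gphi z / gp p (w z)))) := by
          nth_rewrite 2 [← hs]; ring
      _ ≤ √p / 2 * 7 := by gcongr
      _ = _ := by ring
  refine ⟨w, hcont, hmap, ?_, ?_⟩
  · have hkey : ∀ x y, x ≤ y → w y - w x ≤ 3 * (y - x) := by
      intro x y hxy
      rcases le_total 0 x with h | h
      · exact hA x y h hxy
      rcases le_total 0 y with h' | h'
      · have h1 := hA 0 y le_rfl h'
        have h2 := hA 0 (-x) le_rfl (by linarith)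
        rw [hodd] at h2
        linarith
      · have h2 := hA (-y) (-x) (by linarith) (by linarith)
        rw [hodd, hodd] at h2
        linarith
    intro x x'
    rcases le_total x x' with h | h
    · rw [abs_sub_comm, abs_sub_comm x, abs_of_nonneg (by linarith [hmono.monotone h]), abs_of_nonneg (by linarith)]
      exact hkey _ _ h
    · rw [abs_of_nonneg (by linarith [hmono.monotone h]), abs_of_nonneg (by linarith)]
      exact hkey _ _ h
  · intro x x'
    rw [habs, habs]
    have h1 := abs_abs_sub_abs_le_abs_sub x x'
    refine le_trans ?_ (mul_le_mul_of_nonneg_left h1 (by positivity))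
    generalize hu : |x| = u
    generalize hu' : |x'| = u'
    have hu0 : 0 ≤ u := hu ▸ abs_nonneg _
    have hu0' : 0 ≤ u' := hu' ▸ abs_nonneg _
    have hm : ∀ a b, 0 ≤ a → a ≤ b → w a ^ (p / 2) ≤ w b ^ (p / 2) := fun a b ha hab =>
      Real.rpow_le_rpow (hwnn a ha) (hmono.monotone hab) (by linarith)
    rcases le_total u u' with h | h
    · rw [abs_sub_comm, abs_sub_comm u, abs_of_nonneg (by linarith [hm u u' hu0 h]), abs_of_nonneg (by linarith)]
      exact hB _ _ hu0 h
    · rw [abs_of_nonneg (by linarith [hm u' u hu0' h]), abs_of_nonneg (by linarith)]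
      exact hB _ _ hu0' h

noncomputable def Gn (n : ℕ) (p N t : ℝ) : ℝ := ∫ s in (0:ℝ)..t, s ^ (n - 1) * Real.exp (-(N * s ^ p))
noncomputable def Kn (n : ℕ) (p N : ℝ) : ℝ := ((n : ℝ) * Gn n p N 1) ^ ((1:ℝ) / n) / Zp p

theorem Gn_cont {p : ℝ} (hp : 2 ≤ p) (n : ℕ) (N : ℝ) :
    Continuous (fun s : ℝ => s ^ (n - 1) * Real.exp (-(N * s ^ p))) := by
  have : Continuous (fun s : ℝ => s ^ p) := continuous_id.rpow_const fun _ => Or.inr (by linarith)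
  fun_prop

theorem Gn_scale {p : ℝ} {n : ℕ} (hn : 1 ≤ n) (N : ℝ) {t : ℝ} (ht : 0 ≤ t) :
    Gn n p N t = t ^ n * Gn n p (t ^ p * N) 1 := by
  unfold Gn
  have h := intervalIntegral.mul_integral_comp_mul_left (a := 0) (b := 1)
    (f := fun s : ℝ => s ^ (n - 1) * Real.exp (-(N * s ^ p))) t
  rw [mul_zero, mul_one] at h
  rw [← h]
  have h2 : t ^ n = t * t ^ (n - 1) := by rw [← pow_succ']; congr 1; omega
  rw [h2, mul_assoc]
  congr 1
  rw [← intervalIntegral.integral_const_mul]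
  apply intervalIntegral.integral_congr
  intro s hs
  rw [Set.uIcc_of_le zero_le_one] at hs
  simp only
  rw [Real.mul_rpow ht hs.1, mul_pow]
  ring_nf

theorem Gn_anti {p : ℝ} (hp : 2 ≤ p) (n : ℕ) {N N' : ℝ} (h : N ≤ N') : Gn n p N' 1 ≤ Gn n p N 1 := by
  apply intervalIntegral.integral_mono_on zero_le_one ((Gn_cont hp n N').intervalIntegrable _ _)
    ((Gn_cont hp n N).intervalIntegrable _ _)
  intro s hs
  have h0 := hs.1
  have : 0 ≤ s ^ p := by positivity
  gcongr

theorem Gn_exp {p : ℝ} (hp : 2 ≤ p) (n : ℕ) {N N' : ℝ} (h : N ≤ N') :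
    Real.exp (-(N' - N)) * Gn n p N 1 ≤ Gn n p N' 1 := by
  unfold Gn
  rw [← intervalIntegral.integral_const_mul]
  apply intervalIntegral.integral_mono_on zero_le_one
    ((continuous_const.mul (Gn_cont hp n N)).intervalIntegrable _ _)
    ((Gn_cont hp n N').intervalIntegrable _ _)
  intro s hs
  have h0 := hs.1
  simp only [Pi.mul_apply]
  rw [mul_left_comm, ← Real.exp_add]
  have : s ^ p ≤ 1 := Real.rpow_le_one hs.1 hs.2 (by linarith)
  gcongr
  nlinarith

theorem Gn_pos {p : ℝ} (hp : 2 ≤ p) (n : ℕ) (N : ℝ) {t : ℝ} (ht : 0 < t) : 0 < Gn n p N t := by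
  apply intervalIntegral.intervalIntegral_pos_of_pos_on ((Gn_cont hp n N).intervalIntegrable _ _) _ ht
  intro s hs
  have := hs.1
  positivity

theorem Gn_mono {p : ℝ} (hp : 2 ≤ p) (n : ℕ) (N : ℝ) {s t : ℝ} (hs : 0 ≤ s) (hst : s ≤ t) :
    Gn n p N s ≤ Gn n p N t := by
  apply intervalIntegral.integral_mono_interval le_rfl hs hst _ ((Gn_cont hp n N).intervalIntegrable _ _)
  filter_upwards [ae_restrict_mem measurableSet_Ioc] with u hu
  have := hu.1
  simp only [Pi.zero_apply]
  positivity

theorem Gn_zero {p : ℝ} {n : ℕ} (hn : 1 ≤ n) : (n : ℝ) * Gn n p 0 1 = 1 := by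
  unfold Gn
  simp only [zero_mul, neg_zero, Real.exp_zero, mul_one, integral_pow]
  have : n - 1 + 1 = n := by omega
  rw [this, one_pow, zero_pow (by omega)]
  have : (n : ℝ) ≠ 0 := by positivity
  have h2 : ((n - 1 : ℕ) : ℝ) + 1 = n := by rw [← Nat.cast_succ]; congr 1
  rw [h2]
  field_simp
  simp

theorem Kn_pos {p : ℝ} (hp : 2 ≤ p) {n : ℕ} (hn : 1 ≤ n) (N : ℝ) : 0 < Kn n p N := by
  unfold Kn
  have h1 := Gn_pos hp n N zero_lt_one
  have h2 := Zp_pos hp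
  have : 0 < (n:ℝ) := by positivity
  positivity

theorem Kn_anti {p : ℝ} (hp : 2 ≤ p) (n : ℕ) : Antitone (Kn n p) := by
  intro N N' h
  unfold Kn
  have h1 := Gn_pos hp n N' zero_lt_one
  have h2 := Zp_pos hp
  have h3 := Gn_anti hp n h
  gcongr

theorem Kn_zero (p : ℝ) {n : ℕ} (hn : 1 ≤ n) : Kn n p 0 = (Zp p)⁻¹ := by
  unfold Kn
  rw [Gn_zero hn, Real.one_rpow, one_div]

theorem Kn_exp {p : ℝ} (hp : 2 ≤ p) {n : ℕ} (hn : 1 ≤ n) {N N' : ℝ} (h : N ≤ N') :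
    Kn n p N - Kn n p N' ≤ Kn n p N * ((N' - N) / n) := by
  have hn0 : 0 < (n:ℝ) := by positivity
  have h2 := Zp_pos hp
  have h4 := Gn_pos hp n N zero_lt_one
  have h1 : Kn n p N * Real.exp (-((N' - N) / n)) ≤ Kn n p N' := by
    unfold Kn
    have h3 := Gn_exp hp n h
    have h5 : Real.exp (-((N' - N) / n)) = (Real.exp (-(N' - N))) ^ ((1:ℝ) / n) := by
      rw [← Real.exp_mul]; congr 1; ring
    rw [h5, div_mul_eq_mul_div, ← Real.mul_rpow (by positivity) (by positivity)]
    have h6 : (n:ℝ) * Gn n p N 1 * Real.exp (-(N' - N)) ≤ (n:ℝ) * Gn n p N' 1 := by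
      calc _ = (n:ℝ) * (Real.exp (-(N' - N)) * Gn n p N 1) := by ring
        _ ≤ _ := by gcongr
    apply div_le_div_of_nonneg_right _ h2.le
    exact Real.rpow_le_rpow (by positivity) h6 (by positivity)
  have h3 := Real.add_one_le_exp (-((N' - N) / n))
  have h5 := Kn_pos hp hn N
  nlinarith

theorem Kn_rad {p : ℝ} (hp : 2 ≤ p) {n : ℕ} (hn : 1 ≤ n) (N : ℝ) {t : ℝ} (ht : 0 ≤ t) :
    Kn n p (t ^ p * N) * t = ((n : ℝ) * Gn n p N t) ^ ((1:ℝ) / n) / Zp p := by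
  have hn0 : 0 < (n:ℝ) := by positivity
  have h4 := Gn_pos hp n (t ^ p * N) zero_lt_one
  rw [Gn_scale hn N ht, Kn, mul_left_comm,
    Real.mul_rpow (x := t ^ n) (y := (n:ℝ) * Gn n p (t ^ p * N) 1) (by positivity) (by positivity)]
  rw [← Real.rpow_natCast t n, ← Real.rpow_mul ht, mul_one_div_cancel hn0.ne', Real.rpow_one]
  ring

theorem Kn_rad_mono {p : ℝ} (hp : 2 ≤ p) {n : ℕ} (hn : 1 ≤ n) {s t : ℝ} (hs : 0 ≤ s) (hst : s ≤ t) :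
    Kn n p (s ^ p) * s ≤ Kn n p (t ^ p) * t := by
  have h1 := Kn_rad hp hn 1 hs
  have h2 := Kn_rad hp hn 1 (hs.trans hst)
  rw [mul_one] at h1 h2
  rw [h1, h2]
  have h3 := Gn_mono hp n 1 hs hst
  have hZ := Zp_pos hp
  have h4 : 0 ≤ Gn n p 1 s := by
    have := Gn_mono hp n 1 le_rfl hs
    simpa [Gn] using this
  gcongr

theorem Kn_log {p : ℝ} (hp : 2 ≤ p) {n : ℕ} (hn : 1 ≤ n) {M M' : ℝ} (hM : 0 < M) (h : M ≤ M') :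
    Kn n p (M ^ 2) - Kn n p (M' ^ 2) ≤ Kn n p (M ^ 2) * (2 / p * ((M' - M) / M)) := by
  have hp0 : 0 < p := by linarith
  have hM' : 0 < M' := hM.trans_le h
  have e : ∀ M : ℝ, 0 < M → (M ^ (2 / p)) ^ p = M ^ 2 := by
    intro M hM
    rw [← Real.rpow_mul hM.le, div_mul_cancel₀ _ hp0.ne']
    exact Real.rpow_natCast M 2
  have h1 := Kn_rad_mono hp hn (s := M ^ (2 / p)) (t := M' ^ (2 / p)) (by positivity)
    (Real.rpow_le_rpow hM.le h (by positivity))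
  rw [e M hM, e M' hM'] at h1
  have h5 := Kn_pos hp hn (M ^ 2)
  have h6 : 1 - 2 / p * ((M' - M) / M) ≤ (M / M') ^ (2 / p) := by
    have h7 : (M / M') = Real.exp (-Real.log (M' / M)) := by
      rw [Real.exp_neg, Real.exp_log (by positivity)]; field_simp
    rw [h7, ← Real.exp_mul]
    have h8 := Real.add_one_le_exp (-Real.log (M' / M) * (2 / p))
    have h9 := Real.log_le_sub_one_of_pos (show 0 < M' / M by positivity)
    have h10 : M' / M - 1 = (M' - M) / M := by field_simp
    rw [h10] at h9
    have h11 : 0 < 2 / p := by positivity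
    nlinarith
  have h7 : Kn n p (M ^ 2) * (M / M') ^ (2 / p) ≤ Kn n p (M' ^ 2) := by
    rw [Real.div_rpow hM.le hM'.le, ← mul_div_assoc, div_le_iff₀ (by positivity)]
    exact h1
  nlinarith

/-- the main radial estimate -/
theorem Kn_main {p : ℝ} (hp : 2 ≤ p) {n : ℕ} (hn : 1 ≤ n) {M M' : ℝ} (hM : 0 ≤ M) (h : M ≤ M') :
    (Kn n p (M ^ 2) - Kn n p (M' ^ 2)) * ((√n / (n:ℝ) ^ (1 / p)) * M ^ (2 / p)) ≤
      2 / √p * (Zp p)⁻¹ * (M' - M) := by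
  have hp0 : 0 < p := by linarith
  have hn0 : 0 < (n:ℝ) := by positivity
  have hZ := Zp_pos hp
  have hsp : √p * √p = p := Real.mul_self_sqrt hp0.le
  have hsn : √(n:ℝ) * √(n:ℝ) = n := Real.mul_self_sqrt hn0.le
  have hsp0 : 0 < √p := Real.sqrt_pos.2 hp0
  have hsn0 : 0 < √(n:ℝ) := Real.sqrt_pos.2 hn0
  set m := √(n:ℝ) / √p with hm
  have hm0 : 0 < m := by positivity
  set c := √(n:ℝ) / (n:ℝ) ^ (1 / p) with hc
  have hc0 : 0 < c := by positivity
  have hA : c * m ^ (2 / p) ≤ √n := by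
    have h1 : m ^ (2 / p) ≤ (n:ℝ) ^ (1 / p) := by
      have : m ≤ √n := by rw [hm]; apply div_le_self hsn0.le; apply Real.one_le_sqrt.2; linarith
      calc m ^ (2 / p) ≤ (√(n:ℝ)) ^ (2 / p) := by gcongr
        _ = _ := by
          rw [Real.sqrt_eq_rpow, ← Real.rpow_mul hn0.le]; congr 1; ring
    calc c * m ^ (2 / p) ≤ c * (n:ℝ) ^ (1 / p) := by gcongr
      _ = _ := by rw [hc]; field_simp
  have hK : ∀ M : ℝ, Kn n p (M ^ 2) ≤ (Zp p)⁻¹ := by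
    intro M; rw [← Kn_zero p hn]; exact Kn_anti hp n (sq_nonneg M)
  -- large M
  have c1 : ∀ M M', m ≤ M → M ≤ M' → (Kn n p (M ^ 2) - Kn n p (M' ^ 2)) * (c * M ^ (2 / p)) ≤
      2 / √p * (Zp p)⁻¹ * (M' - M) := by
    intro M M' hmM hMM
    have hM0 : 0 < M := hm0.trans_le hmM
    have h1 := Kn_log hp hn hM0 hMM
    have h2 : M ^ (2 / p) / M ≤ m ^ (2 / p) / m := by
      have e : ∀ x : ℝ, 0 < x → x ^ (2 / p) / x = x ^ (2 / p - 1) := fun x hx => by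
        rw [Real.rpow_sub_one hx.ne']
      rw [e M hM0, e m hm0]
      apply Real.rpow_le_rpow_of_nonpos hm0 hmM
      have : 2 / p ≤ 1 := by rw [div_le_one hp0]; exact hp
      linarith
    have hd : 0 ≤ M' - M := by linarith
    have h3 := Kn_pos hp hn (M ^ 2)
    calc _ ≤ (Kn n p (M ^ 2) * (2 / p * ((M' - M) / M))) * (c * M ^ (2 / p)) := by gcongr
      _ = Kn n p (M ^ 2) * (2 / p * (M' - M) * (c * (M ^ (2 / p) / M))) := by ring
      _ ≤ (Zp p)⁻¹ * (2 / p * (M' - M) * (c * (m ^ (2 / p) / m))) := by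
          gcongr
          exact hK M
      _ = (Zp p)⁻¹ * (2 / p * (M' - M) * ((c * m ^ (2 / p)) / m)) := by ring
      _ ≤ (Zp p)⁻¹ * (2 / p * (M' - M) * (√n / m)) := by gcongr
      _ = _ := by
          rw [hm]; nth_rewrite 2 [← hsp]; field_simp
  have c2 : ∀ M M', 0 ≤ M → M ≤ M' → M' ≤ m → (Kn n p (M ^ 2) - Kn n p (M' ^ 2)) * (c * M ^ (2 / p)) ≤
      2 / √p * (Zp p)⁻¹ * (M' - M) := by
    intro M M' hM0 hMM hMm
    have h1 := Kn_exp hp hn (show M ^ 2 ≤ M' ^ 2 by gcongr)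
    have hd : 0 ≤ M' - M := by linarith
    have h3 := Kn_pos hp hn (M ^ 2)
    have h4 : M ^ (2 / p) ≤ m ^ (2 / p) := Real.rpow_le_rpow hM0 (hMM.trans hMm) (by positivity)
    calc _ ≤ (Kn n p (M ^ 2) * ((M' ^ 2 - M ^ 2) / n)) * (c * M ^ (2 / p)) := by gcongr
      _ = Kn n p (M ^ 2) * ((M' - M) * (M' + M) / n * (c * M ^ (2 / p))) := by ring
      _ ≤ (Zp p)⁻¹ * ((M' - M) * (m + m) / n * (c * m ^ (2 / p))) := by
          have h5 : 0 ≤ M' + M := by linarith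
          have h6 : M ≤ m := hMM.trans hMm
          gcongr
          exact hK M
      _ ≤ (Zp p)⁻¹ * ((M' - M) * (m + m) / n * √n) := by gcongr
      _ = _ := by
          rw [hm]; nth_rewrite 3 [← hsn]; field_simp; ring
  rcases le_total m M with h1 | h1
  · exact c1 M M' h1 h
  rcases le_total M' m with h2 | h2
  · exact c2 M M' hM h h2
  have a1 := c2 M m hM h1 le_rfl
  have a2 := c1 m M' le_rfl h2
  have h4 : M ^ (2 / p) ≤ m ^ (2 / p) := Real.rpow_le_rpow hM h1 (by positivity)
  have h5 : 0 ≤ Kn n p (m ^ 2) - Kn n p (M' ^ 2) := by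
    have := Kn_anti hp n (show m ^ 2 ≤ M' ^ 2 by gcongr)
    linarith
  have h6 : (Kn n p (m ^ 2) - Kn n p (M' ^ 2)) * (c * M ^ (2 / p)) ≤
    (Kn n p (m ^ 2) - Kn n p (M' ^ 2)) * (c * m ^ (2 / p)) := by gcongr
  linarith

theorem norm_le_lp {p : ℝ} (hp : 2 ≤ p) {n : ℕ} (hn : 1 ≤ n) (y : EuclideanSpace ℝ (Fin n)) :
    ‖y‖ ≤ (√n / (n:ℝ) ^ (1 / p)) * (√(∑ i, |y i| ^ p)) ^ (2 / p) := by
  have hp0 : 0 < p := by linarith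
  have hn0 : 0 < (n:ℝ) := by positivity
  have h1 := Real.rpow_sum_le_const_mul_sum_rpow Finset.univ (fun i => y i ^ 2) (show 1 ≤ p / 2 by linarith)
  have hN : 0 ≤ ∑ i, |y i| ^ p := Finset.sum_nonneg fun i _ => by positivity
  have h2 : ∑ i, |y i ^ 2| = ‖y‖ ^ 2 := by
    rw [EuclideanSpace.norm_sq_eq]; simp
  have h3 : ∀ i, |y i ^ 2| ^ (p / 2) = |y i| ^ p := by
    intro i
    rw [abs_pow, ← Real.rpow_natCast, ← Real.rpow_mul (abs_nonneg _)]
    congr 1; push_cast; ring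
  simp only [h2, h3, Finset.card_univ, Fintype.card_fin] at h1
  have h4 : (‖y‖ ^ 2) ^ (p / 2) = ‖y‖ ^ p := by
    rw [← Real.rpow_natCast, ← Real.rpow_mul (norm_nonneg _)]
    congr 1; push_cast; ring
  rw [h4] at h1
  have h5 : (√n / (n:ℝ) ^ (1 / p)) = ((n:ℝ) ^ (p / 2 - 1)) ^ (1 / p) := by
    rw [Real.sqrt_eq_rpow, ← Real.rpow_mul hn0.le, ← Real.rpow_sub hn0]
    congr 1; field_simp
  have h6 : (√(∑ i, |y i| ^ p)) ^ (2 / p) = (∑ i, |y i| ^ p) ^ (1 / p) := by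
    rw [Real.sqrt_eq_rpow, ← Real.rpow_mul hN]; congr 1; ring
  rw [h5, h6, ← Real.mul_rpow (by positivity) hN]
  calc ‖y‖ = (‖y‖ ^ p) ^ (1 / p) := by
        rw [← Real.rpow_mul (norm_nonneg _), mul_one_div_cancel hp0.ne', Real.rpow_one]
    _ ≤ _ := by gcongr

theorem coord_lip {n : ℕ} (f : ℝ → ℝ) {L : ℝ} (hL : 0 ≤ L) (hf : ∀ x x', |f x - f x'| ≤ L * |x - x'|)
    (x x' : EuclideanSpace ℝ (Fin n)) :
    ‖(WithLp.toLp 2 (fun i => f (x i)) : EuclideanSpace ℝ (Fin n)) - WithLp.toLp 2 (fun i => f (x' i))‖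
      ≤ L * ‖x - x'‖ := by
  apply le_of_sq_le_sq _ (by positivity)
  rw [mul_pow, EuclideanSpace.norm_sq_eq, EuclideanSpace.norm_sq_eq, Finset.mul_sum]
  apply Finset.sum_le_sum
  intro i _
  rw [← mul_pow]
  apply pow_le_pow_left₀ (norm_nonneg _)
  simpa using hf (x i) (x' i)

theorem radial_lip {p : ℝ} (hp : 2 ≤ p) {n : ℕ} (hn : 1 ≤ n) (w : ℝ → ℝ)
    (h1 : ∀ x x', |w x - w x'| ≤ 3 * |x - x'|)
    (h2 : ∀ x x', |(|w x| ^ (p / 2) - |w x'| ^ (p / 2))| ≤ (7 / 2 * √p) * |x - x'|) :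
    LipschitzWith 14 (fun x : EuclideanSpace ℝ (Fin n) =>
      (WithLp.toLp 2 (fun i => Kn n p (∑ j, |w (x j)| ^ p) * w (x i)) : EuclideanSpace ℝ (Fin n))) := by
  have hp0 : 0 < p := by linarith
  have hsp0 : 0 < √p := Real.sqrt_pos.2 hp0
  have hZ := Zp_pos hp
  have hZe : (Zp p)⁻¹ ≤ 1.4 := by
    have h3 := Zp_ge hp
    rw [inv_le_comm₀ hZ (by norm_num)]
    refine le_trans ?_ h3
    rw [Real.exp_neg]
    have := Real.exp_one_lt_d9
    have h4 : (2.7182818286:ℝ)⁻¹ ≤ (Real.exp 1)⁻¹ := by gcongr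
    have h5 : (1.4:ℝ)⁻¹ ≤ 2 * (2.7182818286:ℝ)⁻¹ := by norm_num
    linarith
  set Y : EuclideanSpace ℝ (Fin n) → EuclideanSpace ℝ (Fin n) := fun x => WithLp.toLp 2 (fun i => w (x i)) with hY
  set Ψ : EuclideanSpace ℝ (Fin n) → EuclideanSpace ℝ (Fin n) :=
    fun x => WithLp.toLp 2 (fun i => |w (x i)| ^ (p / 2)) with hΨ
  have hN : ∀ x, ∑ j, |w (x j)| ^ p = ‖Ψ x‖ ^ 2 := by
    intro x
    rw [EuclideanSpace.norm_sq_eq]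
    apply Finset.sum_congr rfl
    intro i _
    simp only [hΨ, Real.norm_eq_abs, sq_abs]
    rw [sq, ← Real.rpow_add_of_nonneg (abs_nonneg _) (by positivity) (by positivity)]
    congr 1; ring
  have hS : ∀ x, (WithLp.toLp 2 (fun i => Kn n p (∑ j, |w (x j)| ^ p) * w (x i)) : EuclideanSpace ℝ (Fin n))
      = Kn n p (‖Ψ x‖ ^ 2) • Y x := by
    intro x; rw [← hN]; rfl
  have hYn : ∀ x, ‖Y x‖ ≤ (√n / (n:ℝ) ^ (1 / p)) * ‖Ψ x‖ ^ (2 / p) := by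
    intro x
    have := norm_le_lp hp hn (Y x)
    have e : √(∑ i, |(Y x) i| ^ p) = ‖Ψ x‖ := by
      have : ∑ i, |(Y x) i| ^ p = ‖Ψ x‖ ^ 2 := hN x
      rw [this, Real.sqrt_sq (norm_nonneg _)]
    rwa [e] at this
  have key : ∀ x x', ‖Ψ x‖ ≤ ‖Ψ x'‖ →
      ‖Kn n p (‖Ψ x‖ ^ 2) • Y x - Kn n p (‖Ψ x'‖ ^ 2) • Y x'‖ ≤ 14 * ‖x - x'‖ := by
    intro x x' hM
    have e : Kn n p (‖Ψ x‖ ^ 2) • Y x - Kn n p (‖Ψ x'‖ ^ 2) • Y x' =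
      Kn n p (‖Ψ x'‖ ^ 2) • (Y x - Y x') + (Kn n p (‖Ψ x‖ ^ 2) - Kn n p (‖Ψ x'‖ ^ 2)) • Y x := by
      rw [smul_sub, sub_smul]; abel
    have hd : 0 ≤ Kn n p (‖Ψ x‖ ^ 2) - Kn n p (‖Ψ x'‖ ^ 2) := by
      have := Kn_anti hp n (show ‖Ψ x‖ ^ 2 ≤ ‖Ψ x'‖ ^ 2 by gcongr)
      linarith
    have hK : Kn n p (‖Ψ x'‖ ^ 2) ≤ (Zp p)⁻¹ := by
      rw [← Kn_zero p hn]; exact Kn_anti hp n (sq_nonneg _)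
    have a1 : ‖Y x - Y x'‖ ≤ 3 * ‖x - x'‖ := coord_lip w (by norm_num) h1 x x'
    have a2 : ‖Ψ x - Ψ x'‖ ≤ (7 / 2 * √p) * ‖x - x'‖ :=
      coord_lip (fun t => |w t| ^ (p / 2)) (by positivity) h2 x x'
    have a3 : ‖Ψ x'‖ - ‖Ψ x‖ ≤ (7 / 2 * √p) * ‖x - x'‖ := by
      rw [norm_sub_rev] at a2
      exact (norm_sub_norm_le _ _).trans a2
    have a4 := Kn_main hp hn (norm_nonneg (Ψ x)) hM
    have hKp := Kn_pos hp hn (‖Ψ x'‖ ^ 2)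
    rw [e]
    calc _ ≤ ‖Kn n p (‖Ψ x'‖ ^ 2) • (Y x - Y x')‖ + ‖(Kn n p (‖Ψ x‖ ^ 2) - Kn n p (‖Ψ x'‖ ^ 2)) • Y x‖ :=
          norm_add_le _ _
      _ = Kn n p (‖Ψ x'‖ ^ 2) * ‖Y x - Y x'‖ + (Kn n p (‖Ψ x‖ ^ 2) - Kn n p (‖Ψ x'‖ ^ 2)) * ‖Y x‖ := by
          rw [norm_smul, norm_smul, Real.norm_of_nonneg hKp.le, Real.norm_of_nonneg hd]
      _ ≤ (Zp p)⁻¹ * (3 * ‖x - x'‖) + 2 / √p * (Zp p)⁻¹ * (‖Ψ x'‖ - ‖Ψ x‖) := by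
          apply add_le_add
          · gcongr
          · refine le_trans ?_ a4
            gcongr
            exact hYn x
      _ ≤ (Zp p)⁻¹ * (3 * ‖x - x'‖) + 2 / √p * (Zp p)⁻¹ * ((7 / 2 * √p) * ‖x - x'‖) := by gcongr
      _ = (10 * (Zp p)⁻¹) * ‖x - x'‖ := by field_simp; ring
      _ ≤ 14 * ‖x - x'‖ := by gcongr; linarith
  apply LipschitzWith.of_dist_le_mul
  intro x x'
  simp only [hS]
  rw [dist_eq_norm, dist_eq_norm]
  have e14 : ((14 : NNReal) : ℝ) = 14 := by norm_num
  rw [e14]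
  rcases le_total ‖Ψ x‖ ‖Ψ x'‖ with h | h
  · exact key x x' h
  · rw [norm_sub_rev, norm_sub_rev x]; exact key x' x h

theorem log_int {a : ℝ} (ha : 0 < a) :
    ∫⁻ t in Set.Ico (a / 2) a, ENNReal.ofReal t⁻¹ = ENNReal.ofReal (Real.log 2) := by
  have h1 := integral_inv_of_pos (a := a / 2) (b := a) (by positivity) ha
  have h2 : a / (a / 2) = 2 := by field_simp
  rw [h2, intervalIntegral.integral_of_le (by linarith)] at h1
  have hint : IntegrableOn (fun t : ℝ => t⁻¹) (Set.Ioc (a / 2) a) := by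
    have : IntervalIntegrable (fun t : ℝ => t⁻¹) volume (a / 2) a := by
      apply ContinuousOn.intervalIntegrable
      apply continuousOn_id.inv₀
      intro x hx
      rw [Set.uIcc_of_le (by linarith)] at hx
      have := hx.1
      simp only [id]
      linarith
    rwa [intervalIntegrable_iff_integrableOn_Ioc_of_le (by linarith)] at this
  rw [restrict_Ico_eq_restrict_Ioc, ← h1, ofReal_integral_eq_lintegral_ofReal hint]
  filter_upwards [ae_restrict_mem measurableSet_Ioc] with t ht
  have := ht.1
  simp only [Pi.zero_apply]
  have : 0 < t := by linarith
  positivity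

theorem polar {n : ℕ} (hn : 1 ≤ n) (ρ : (Fin n → ℝ) → ℝ) (hρm : Measurable ρ)
    (hρ0 : ∀ y, y ≠ 0 → 0 < ρ y) (hh : ∀ t : ℝ, 0 < t → ∀ y, ρ (t • y) = t * ρ y)
    (F : (Fin n → ℝ) → ℝ≥0∞) (hF : Measurable F) :
    ∫⁻ y in {y | 1 < ρ y ∧ ρ y ≤ 2}, ∫⁻ t in Set.Ioi (0:ℝ), ENNReal.ofReal (t ^ (n - 1)) * F (t • y) =
      ENNReal.ofReal (Real.log 2) * ∫⁻ y, F y := by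
  have : Nonempty (Fin n) := ⟨⟨0, hn⟩⟩
  set D : Set (Fin n → ℝ) := {y | 1 < ρ y ∧ ρ y ≤ 2} with hD
  have hDm : MeasurableSet D := (measurableSet_lt measurable_const hρm).inter (measurableSet_le hρm measurable_const)
  set d : (Fin n → ℝ) → ℝ≥0∞ := D.indicator 1 with hd
  have hdm : Measurable d := measurable_one.indicator hDm
  have hsm : Measurable (fun q : (Fin n → ℝ) × ℝ => q.2 • q.1) := measurable_snd.smul measurable_fst
  have hsm' : Measurable (fun q : (Fin n → ℝ) × ℝ => q.2⁻¹ • q.1) := measurable_snd.inv.smul measurable_fst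
  have hpm : Measurable (fun q : (Fin n → ℝ) × ℝ => ENNReal.ofReal (q.2 ^ (n - 1))) :=
    (measurable_snd.pow_const _).ennreal_ofReal
  have hpm' : Measurable (fun q : (Fin n → ℝ) × ℝ => ENNReal.ofReal (q.2⁻¹)) :=
    measurable_snd.inv.ennreal_ofReal
  calc _ = ∫⁻ y, ∫⁻ t in Set.Ioi (0:ℝ), d y * (ENNReal.ofReal (t ^ (n - 1)) * F (t • y)) := by
        rw [← lintegral_indicator hDm]
        apply lintegral_congr
        intro y
        by_cases hy : y ∈ D
        · simp [hd, hy]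
        · simp [hd, hy]
    _ = ∫⁻ t in Set.Ioi (0:ℝ), ∫⁻ y, d y * (ENNReal.ofReal (t ^ (n - 1)) * F (t • y)) := by
        apply lintegral_lintegral_swap
        exact ((hdm.comp measurable_fst).mul (hpm.mul (hF.comp hsm))).aemeasurable
    _ = ∫⁻ t in Set.Ioi (0:ℝ), ∫⁻ z, ENNReal.ofReal t⁻¹ * d (t⁻¹ • z) * F z := by
        apply setLIntegral_congr_fun measurableSet_Ioi
        intro t ht
        have ht : 0 < t := ht
        have hG : Measurable (fun z => d (t⁻¹ • z) * (ENNReal.ofReal (t ^ (n - 1)) * F z)) :=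
          (hdm.comp (measurable_const_smul _)).mul (hF.const_mul _)
        have h1 := lintegral_map (μ := volume) hG (measurable_const_smul t)
        rw [Measure.map_addHaar_smul _ ht.ne', lintegral_smul_measure] at h1
        simp only [inv_smul_smul₀ ht.ne'] at h1
        simp only
        rw [← h1, smul_eq_mul, ← lintegral_const_mul _ hG]
        apply lintegral_congr
        intro z
        have h2 : ENNReal.ofReal |(t ^ Module.finrank ℝ (Fin n → ℝ))⁻¹| * ENNReal.ofReal (t ^ (n - 1)) =
            ENNReal.ofReal t⁻¹ := by
          rw [← ENNReal.ofReal_mul (abs_nonneg _), abs_of_pos (by positivity)]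
          congr 1
          rw [Module.finrank_fin_fun]
          obtain ⟨m, rfl⟩ : ∃ m, n = m + 1 := ⟨n - 1, by omega⟩
          simp only [Nat.add_sub_cancel]
          field_simp
          exact (pow_succ _ _).symm
        rw [← h2]; ring
    _ = ∫⁻ z, ∫⁻ t in Set.Ioi (0:ℝ), ENNReal.ofReal t⁻¹ * d (t⁻¹ • z) * F z := by
        symm
        apply lintegral_lintegral_swap
        exact ((hpm'.mul (hdm.comp hsm')).mul (hF.comp measurable_fst)).aemeasurable
    _ = ∫⁻ z, ENNReal.ofReal (Real.log 2) * F z := by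
        apply lintegral_congr_ae
        have : ∀ᵐ z : Fin n → ℝ, z ≠ 0 := by
          rw [ae_iff]; simp
        filter_upwards [this] with z hz
        have hz0 := hρ0 z hz
        have hm : Measurable (fun t : ℝ => ENNReal.ofReal t⁻¹ * d (t⁻¹ • z)) :=
          measurable_inv.ennreal_ofReal.mul (hdm.comp (measurable_inv.smul_const z))
        rw [lintegral_mul_const _ hm]
        congr 1
        rw [← log_int hz0, ← lintegral_indicator measurableSet_Ioi, ← lintegral_indicator measurableSet_Ico]
        apply lintegral_congr
        intro t
        by_cases ht : 0 < t
        · have e : (t⁻¹ • z ∈ D) ↔ t ∈ Set.Ico (ρ z / 2) (ρ z) := by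
            simp only [hD, Set.mem_ofPred_eq, Set.mem_Ico]
            rw [hh _ (inv_pos.2 ht), inv_mul_eq_div, lt_div_iff₀ ht, div_le_iff₀ ht, one_mul, and_comm,
              div_le_iff₀ two_pos, mul_comm t]
          by_cases ht2 : t⁻¹ • z ∈ D
          · simp [Set.indicator, ht, hd, ht2, e.1 ht2]
          · have := fun h => ht2 (e.2 h)
            simp [Set.indicator_of_notMem this, hd, ht2]
        · have : t ∉ Set.Ico (ρ z / 2) (ρ z) := by
            intro h; have := h.1; linarith
          simp [Set.indicator_of_notMem this, ht]
    _ = _ := lintegral_const_mul _ hF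

noncomputable def Np {n : ℕ} (p : ℝ) (y : Fin n → ℝ) : ℝ := ∑ i, |y i| ^ p
noncomputable def Tn {n : ℕ} (p : ℝ) (y : Fin n → ℝ) : Fin n → ℝ := Kn n p (Np p y) • y

theorem Np_nonneg {n : ℕ} (p : ℝ) (y : Fin n → ℝ) : 0 ≤ Np p y :=
  Finset.sum_nonneg fun i _ => by positivity

theorem Np_cont {n : ℕ} {p : ℝ} (hp : 2 ≤ p) : Continuous (Np p : (Fin n → ℝ) → ℝ) := by
  unfold Np
  apply continuous_finsetSum
  intro i _
  exact (continuous_apply i).abs.rpow_const fun _ => Or.inr (by linarith)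

theorem Np_pos {n : ℕ} {p : ℝ} {y : Fin n → ℝ} (hy : y ≠ 0) : 0 < Np p y := by
  obtain ⟨i, hi⟩ := Function.ne_iff.1 hy
  have hi : 0 < |y i| := abs_pos.2 hi
  unfold Np
  apply Finset.sum_pos' (fun i _ => by positivity) ⟨i, Finset.mem_univ _, by positivity⟩

theorem Np_smul {n : ℕ} (p : ℝ) {t : ℝ} (ht : 0 ≤ t) (y : Fin n → ℝ) : Np p (t • y) = t ^ p * Np p y := by
  unfold Np
  rw [Finset.mul_sum]
  apply Finset.sum_congr rfl
  intro i _
  rw [Pi.smul_apply, smul_eq_mul, abs_mul, abs_of_nonneg ht, Real.mul_rpow ht (abs_nonneg _)]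

theorem Tn_meas {n : ℕ} {p : ℝ} (hp : 2 ≤ p) : Measurable (Tn p : (Fin n → ℝ) → (Fin n → ℝ)) :=
  ((Kn_anti hp n).measurable.comp (Np_cont hp).measurable).smul measurable_id

theorem Gn_le {p : ℝ} (hp : 2 ≤ p) {n : ℕ} (hn : 1 ≤ n) {t : ℝ} (ht : 0 ≤ t) :
    (n : ℝ) * Gn n p 1 t ≤ Real.Gamma (n / p + 1) := by
  have hp0 : 0 < p := by linarith
  have hn0 : 0 < (n:ℝ) := by positivity
  have h1 := integral_rpow_mul_exp_neg_rpow (p := p) (q := (n:ℝ) - 1) hp0 (by linarith)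
  rw [sub_add_cancel] at h1
  rw [Real.Gamma_add_one (by positivity)]
  have h2 : Gn n p 1 t ≤ 1 / p * Real.Gamma (n / p) := by
    rw [← h1, Gn, intervalIntegral.integral_of_le ht]
    have hint : IntegrableOn (fun x : ℝ => x ^ ((n:ℝ) - 1) * Real.exp (-x ^ p)) (Set.Ioi 0) :=
      integrableOn_rpow_mul_exp_neg_rpow (by linarith) (by linarith)
    calc _ = ∫ s in Set.Ioc 0 t, s ^ ((n:ℝ) - 1) * Real.exp (-s ^ p) := by
          apply setIntegral_congr_fun measurableSet_Ioc
          intro s hs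
          simp only [one_mul]
          rw [← Real.rpow_natCast, Nat.cast_sub hn, Nat.cast_one]
      _ ≤ _ := by
          apply setIntegral_mono_set hint
          · filter_upwards [ae_restrict_mem measurableSet_Ioi] with s hs
            have : 0 < s := hs
            simp only [Pi.zero_apply]
            positivity
          · exact (Set.Ioc_subset_Ioi_self).eventuallyLE
  calc _ ≤ (n:ℝ) * (1 / p * Real.Gamma (n / p)) := by gcongr
    _ = _ := by ring

theorem Tn_mem {p : ℝ} (hp : 2 ≤ p) {n : ℕ} (hn : 1 ≤ n) {r : ℝ} (hr : 0 < r)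
    (hrn : r ^ n = Real.Gamma (n / p + 1) / Zp p ^ n) (y : Fin n → ℝ) : Np p (Tn p y) ≤ r ^ p := by
  have hp0 : 0 < p := by linarith
  have hn0 : 0 < (n:ℝ) := by positivity
  have hZ := Zp_pos hp
  have hN := Np_nonneg p y
  have hK := Kn_pos hp hn (Np p y)
  unfold Tn
  rw [Np_smul p hK.le]
  set M := (Np p y) ^ (1 / p) with hM
  have hM0 : 0 ≤ M := by positivity
  have hMp : M ^ p = Np p y := by
    rw [hM, ← Real.rpow_mul hN, one_div_mul_cancel hp0.ne', Real.rpow_one]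
  rw [← hMp] at hK ⊢
  rw [← Real.mul_rpow hK.le hM0]
  apply Real.rpow_le_rpow (by positivity) _ hp0.le
  have h1 := Kn_rad hp hn 1 hM0
  rw [mul_one] at h1
  rw [h1]
  have h2 := Gn_le hp hn hM0
  have h3 : 0 ≤ Gn n p 1 M := by
    have := Gn_mono hp n 1 le_rfl hM0
    simpa [Gn] using this
  have h4 : Real.Gamma (n / p + 1) = (r * Zp p) ^ n := by
    rw [mul_pow, hrn]; field_simp
  rw [div_le_iff₀ hZ]
  calc _ ≤ ((r * Zp p) ^ n) ^ ((1:ℝ) / n) := by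
        rw [← h4]; gcongr
    _ = _ := by
        rw [← Real.rpow_natCast, ← Real.rpow_mul (by positivity), mul_one_div_cancel hn0.ne', Real.rpow_one]

theorem tau_deriv {p : ℝ} (hp : 2 ≤ p) {n : ℕ} (hn : 1 ≤ n) (N : ℝ) {t : ℝ} (ht : 0 < t) :
    ∃ τ' : ℝ, 0 < τ' ∧ HasDerivAt (fun t => ((n : ℝ) * Gn n p N t) ^ ((1:ℝ) / n) / Zp p) τ' t ∧
      τ' * (((n : ℝ) * Gn n p N t) ^ ((1:ℝ) / n) / Zp p) ^ (n - 1) =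
        t ^ (n - 1) * ((Zp p)⁻¹ ^ n * Real.exp (-(t ^ p * N))) := by
  have hn0 : 0 < (n:ℝ) := by positivity
  have hZ := Zp_pos hp
  have hG := Gn_pos hp n N ht
  have hc := Gn_cont hp n N
  have hd : HasDerivAt (Gn n p N) (t ^ (n - 1) * Real.exp (-(N * t ^ p))) t :=
    intervalIntegral.integral_hasDerivAt_right (hc.intervalIntegrable _ _)
      hc.stronglyMeasurable.stronglyMeasurableAtFilter hc.continuousAt
  have hd2 := (((hd.const_mul (n:ℝ)).rpow_const (p := (1:ℝ) / n) (Or.inl (by positivity))).div_const (Zp p))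
  refine ⟨_, ?_, hd2, ?_⟩
  · positivity
  · set u := (n:ℝ) * Gn n p N t with hu
    have hu0 : 0 < u := by positivity
    have e1 : u ^ ((1:ℝ) / n - 1) * (u ^ ((1:ℝ) / n)) ^ (n - 1) = 1 := by
      rw [← Real.rpow_natCast, ← Real.rpow_mul hu0.le, ← Real.rpow_add hu0, Nat.cast_sub hn]
      have : (1:ℝ) / n - 1 + 1 / n * (n - (1:ℕ)) = 0 := by push_cast; field_simp; ring
      rw [this, Real.rpow_zero]
    have e2 : (Zp p)⁻¹ ^ n = (Zp p)⁻¹ * (Zp p)⁻¹ ^ (n - 1) := by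
      rw [← pow_succ']; congr 1; omega
    rw [div_pow, e2, mul_comm (t ^ p) N, inv_pow]
    calc _ = (u ^ ((1:ℝ) / n - 1) * (u ^ ((1:ℝ) / n)) ^ (n - 1)) * ((n:ℝ) * (1 / n)) *
        (t ^ (n - 1) * ((Zp p)⁻¹ * (Zp p ^ (n - 1))⁻¹ * Real.exp (-(N * t ^ p)))) := by
          field_simp
      _ = _ := by rw [e1, mul_one_div_cancel hn0.ne']; ring

theorem inner_le {p : ℝ} (hp : 2 ≤ p) {n : ℕ} (hn : 1 ≤ n) (Bx A : Set (Fin n → ℝ))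
    (hT : ∀ y, Tn p y ∈ Bx) (y : Fin n → ℝ) :
    ∫⁻ t in Set.Ioi (0:ℝ), ENNReal.ofReal (t ^ (n - 1)) *
      (ENNReal.ofReal ((Zp p)⁻¹ ^ n * Real.exp (-(Np p (t • y)))) * A.indicator 1 (Tn p (t • y))) ≤
    ∫⁻ t in Set.Ioi (0:ℝ), ENNReal.ofReal (t ^ (n - 1)) * (A ∩ Bx).indicator 1 (t • y) := by
  have hn0 : 0 < (n:ℝ) := by positivity
  have hZ := Zp_pos hp
  set N := Np p y with hN
  set τ : ℝ → ℝ := fun t => ((n : ℝ) * Gn n p N t) ^ ((1:ℝ) / n) / Zp p with hτ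
  have hex : ∀ t : ℝ, ∃ τ' : ℝ, 0 < t → (0 < τ' ∧ HasDerivAt τ τ' t ∧ τ' * (τ t) ^ (n - 1) =
        t ^ (n - 1) * ((Zp p)⁻¹ ^ n * Real.exp (-(t ^ p * N)))) := by
    intro t
    by_cases ht : 0 < t
    · obtain ⟨a, ha⟩ := tau_deriv hp hn N ht
      exact ⟨a, fun _ => ha⟩
    · exact ⟨0, fun h => absurd h ht⟩
  choose τ' hτ' using hex
  have hpos : ∀ t, 0 < t → 0 < τ t := by
    intro t ht
    have := Gn_pos hp n N ht
    simp only [hτ]; positivity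
  have hTτ : ∀ t, 0 < t → Tn p (t • y) = τ t • y := by
    intro t ht
    unfold Tn
    rw [Np_smul p ht.le, smul_smul, Kn_rad hp hn N ht.le]
  have hinj : Set.InjOn τ (Set.Ioi 0) := by
    apply StrictMonoOn.injOn
    apply strictMonoOn_of_deriv_pos (convex_Ioi 0)
    · exact fun t ht => (hτ' t ht).2.1.continuousAt.continuousWithinAt
    · intro t ht
      rw [interior_Ioi] at ht
      rw [(hτ' t ht).2.1.deriv]; exact (hτ' t ht).1
  have hcv := lintegral_image_eq_lintegral_abs_deriv_mul measurableSet_Ioi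
    (fun t ht => (hτ' t ht).2.1.hasDerivWithinAt) hinj
    (fun t => ENNReal.ofReal (t ^ (n - 1)) * (A ∩ Bx).indicator 1 (t • y))
  calc _ = ∫⁻ t in Set.Ioi (0:ℝ), ENNReal.ofReal |τ' t| *
        (ENNReal.ofReal ((τ t) ^ (n - 1)) * (A ∩ Bx).indicator 1 (τ t • y)) := by
        apply setLIntegral_congr_fun measurableSet_Ioi
        intro t ht
        have ht : 0 < t := ht
        obtain ⟨h1, h2, h3⟩ := hτ' t ht
        simp only
        rw [Np_smul p ht.le, ← hN, ← mul_assoc, ← mul_assoc, ← ENNReal.ofReal_mul (by positivity),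
          ← ENNReal.ofReal_mul (by positivity), ← h3, abs_of_pos h1, ← hTτ t ht]
        congr 1
        by_cases hA : Tn p (t • y) ∈ A
        · have : Tn p (t • y) ∈ A ∩ Bx := ⟨hA, hT _⟩
          simp [hA, this]
        · have : Tn p (t • y) ∉ A ∩ Bx := fun h => hA h.1
          simp [hA, this]
    _ = _ := hcv.symm
    _ ≤ _ := by
        apply lintegral_mono_set
        rintro _ ⟨t, ht, rfl⟩
        exact hpos t ht

theorem map_T_le {p : ℝ} (hp : 2 ≤ p) {n : ℕ} (hn : 1 ≤ n) (Bx : Set (Fin n → ℝ)) (hBm : MeasurableSet Bx)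
    (hT : ∀ y, Tn p y ∈ Bx) :
    Measure.map (Tn p) (volume.withDensity (fun y : Fin n → ℝ => ∏ i, ENNReal.ofReal (gp p (y i)))) ≤
      volume.restrict Bx := by
  have hp0 : 0 < p := by linarith
  have hZ := Zp_pos hp
  have hprod : ∀ y : Fin n → ℝ, ∏ i, ENNReal.ofReal (gp p (y i)) =
      ENNReal.ofReal ((Zp p)⁻¹ ^ n * Real.exp (-(Np p y))) := by
    intro y
    rw [← ENNReal.ofReal_prod_of_nonneg fun i _ => ((gp_nice hp).pos _).le]
    congr 1
    unfold gp Np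
    rw [Finset.prod_mul_distrib, ← Real.exp_sum]
    simp
  have hdm : Measurable (fun y : Fin n → ℝ => ENNReal.ofReal ((Zp p)⁻¹ ^ n * Real.exp (-(Np p y)))) := by
    have := (Np_cont (n := n) hp).measurable
    fun_prop
  simp only [hprod]
  refine Measure.le_iff.2 fun A hA => ?_
  have hTA : MeasurableSet (Tn p ⁻¹' A) := Tn_meas hp hA
  rw [Measure.map_apply (Tn_meas hp) hA, withDensity_apply _ hTA, Measure.restrict_apply hA,
    ← lintegral_indicator_one (hA.inter hBm), ← lintegral_indicator hTA]
  have hρh : ∀ t : ℝ, 0 < t → ∀ y : Fin n → ℝ, (Np p (t • y)) ^ (1 / p) = t * (Np p y) ^ (1 / p) := by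
    intro t ht y
    rw [Np_smul p ht.le, Real.mul_rpow (by positivity) (Np_nonneg p y), ← Real.rpow_mul ht.le,
      mul_one_div_cancel hp0.ne', Real.rpow_one]
  have hρm : Measurable (fun y : Fin n → ℝ => (Np p y) ^ (1 / p)) :=
    (Np_cont (n := n) hp).measurable.pow_const _
  have hρ0 : ∀ y : Fin n → ℝ, y ≠ 0 → 0 < (Np p y) ^ (1 / p) := fun y hy => by
    have := Np_pos (p := p) hy
    positivity
  have hI : Measurable (A.indicator (1 : (Fin n → ℝ) → ℝ≥0∞)) := measurable_one.indicator hA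
  have p1 := polar hn (fun y : Fin n → ℝ => (Np p y) ^ (1 / p)) hρm hρ0 hρh
    (fun y => ENNReal.ofReal ((Zp p)⁻¹ ^ n * Real.exp (-(Np p y))) * A.indicator 1 (Tn p y))
    (hdm.mul (hI.comp (Tn_meas hp)))
  have p2 := polar hn (fun y : Fin n → ℝ => (Np p y) ^ (1 / p)) hρm hρ0 hρh
    ((A ∩ Bx).indicator 1) (measurable_one.indicator (hA.inter hBm))
  have hl0 : ENNReal.ofReal (Real.log 2) ≠ 0 := by
    have := Real.log_pos one_lt_two
    simpa using this
  rw [← ENNReal.mul_le_mul_iff_right hl0 ENNReal.ofReal_ne_top, ← p2]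
  have e : ∫⁻ y, (Tn p ⁻¹' A).indicator (fun y => ENNReal.ofReal ((Zp p)⁻¹ ^ n * Real.exp (-(Np p y)))) y =
    ∫⁻ y, ENNReal.ofReal ((Zp p)⁻¹ ^ n * Real.exp (-(Np p y))) * A.indicator 1 (Tn p y) := by
    apply lintegral_congr
    intro y
    by_cases h : Tn p y ∈ A
    · have h' : y ∈ Tn p ⁻¹' A := h
      simp [h, h']
    · have h' : y ∉ Tn p ⁻¹' A := h
      simp [h, h']
  rw [e, ← p1]
  apply lintegral_mono
  intro y
  exact inner_le hp hn Bx A hT y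

theorem assemble {n : ℕ} (Q : (Fin n → ℝ) → (Fin n → ℝ)) (hQ : Measurable Q) (Bx : Set (Fin n → ℝ))
    (hB : MeasurableSet Bx)
    (hmap : Measure.map Q (Measure.pi fun _ : Fin n => ProbabilityTheory.gaussianReal 0 1) = volume.restrict Bx) :
    Measure.map (fun x : EuclideanSpace ℝ (Fin n) => (WithLp.toLp 2 (Q (WithLp.ofLp x)) : EuclideanSpace ℝ (Fin n)))
      (stdGaussian n) = volume.restrict (WithLp.ofLp ⁻¹' Bx : Set (EuclideanSpace ℝ (Fin n))) := by
  have hof : Measurable (@WithLp.ofLp 2 (Fin n → ℝ)) := (PiLp.volume_preserving_ofLp (Fin n)).measurable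
  have hto : Measurable (@WithLp.toLp 2 (Fin n → ℝ)) := (PiLp.volume_preserving_toLp (Fin n)).measurable
  have h1 : (fun x : EuclideanSpace ℝ (Fin n) => (WithLp.toLp 2 (Q (WithLp.ofLp x)) : EuclideanSpace ℝ (Fin n)))
    = (@WithLp.toLp 2 (Fin n → ℝ)) ∘ (Q ∘ (@WithLp.ofLp 2 (Fin n → ℝ))) := rfl
  rw [h1, ← Measure.map_map hto (hQ.comp hof), ← Measure.map_map hQ hof, stdG_map, hmap]
  have := ((PiLp.volume_preserving_toLp (Fin n)).restrict_preimage (hof hB)).map_eq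
  exact this

theorem interior_aux {n : ℕ} (U Bx : Set (Fin n → ℝ)) (hU : IsOpen U) (hUB : U ⊆ Bx) (h0 : (0 : Fin n → ℝ) ∈ U) :
    (interior (WithLp.ofLp ⁻¹' Bx : Set (EuclideanSpace ℝ (Fin n)))).Nonempty := by
  refine ⟨0, mem_interior.2 ⟨WithLp.ofLp ⁻¹' U, fun x hx => hUB hx, ?_, ?_⟩⟩
  · exact hU.preimage (PiLp.continuous_ofLp 2 _)
  · exact h0

theorem compact_aux {n : ℕ} (Bx : Set (Fin n → ℝ)) (h : IsCompact Bx) :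
    IsCompact (WithLp.ofLp ⁻¹' Bx : Set (EuclideanSpace ℝ (Fin n))) := by
  have h1 := h.image (PiLp.continuous_toLp 2 (fun _ : Fin n => ℝ))
  convert h1 using 1
  ext x
  constructor
  · intro hx
    exact ⟨WithLp.ofLp x, hx, rfl⟩
  · rintro ⟨y, hy, rfl⟩
    exact hy

theorem convex_aux {n : ℕ} (Bx : Set (Fin n → ℝ)) (h : Convex ℝ Bx) :
    Convex ℝ (WithLp.ofLp ⁻¹' Bx : Set (EuclideanSpace ℝ (Fin n))) := by
  intro x hx y hy a b ha hb hab
  exact h hx hy ha hb hab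

theorem cube_case (n : ℕ) (hn : 1 ≤ n) (r : ℝ) (hr : 0 < r)
    (hvol : volume (WithLp.ofLp ⁻¹' (Set.Icc (fun _ => -r) (fun _ => r)) : Set (EuclideanSpace ℝ (Fin n))) = 1)
    (k : ℕ) (hk : 1 ≤ k) :
    (1 / 392 : ℝ) * lambdaLip (stdGaussian n) k ≤
      lambdaLip (Measure.comap (Subtype.val :
        (WithLp.ofLp ⁻¹' (Set.Icc (fun _ => -r) (fun _ => r)) : Set (EuclideanSpace ℝ (Fin n))) →
          EuclideanSpace ℝ (Fin n)) volume) k := by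
  have hm : MeasurableSet (Set.Icc (fun _ => -r) (fun _ => r) : Set (Fin n → ℝ)) := measurableSet_Icc
  have hr2 : r = 1 / 2 := by
    rw [(PiLp.volume_preserving_ofLp (Fin n)).measure_preimage hm.nullMeasurableSet, Real.volume_Icc_pi] at hvol
    simp only [Finset.prod_const, Finset.card_univ, Fintype.card_fin] at hvol
    rw [← ENNReal.ofReal_pow (by linarith), ENNReal.ofReal_eq_one] at hvol
    have := (pow_eq_one_iff_of_nonneg (by linarith) (by omega)).1 hvol
    linarith
  subst hr2
  set Q : (Fin n → ℝ) → (Fin n → ℝ) := fun x i => cdf0 gphi (x i) with hQ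
  have hcm : Measurable (cdf0 gphi) := gphi_nice.continuous.measurable
  have hQm : Measurable Q := measurable_pi_lambda _ fun i => hcm.comp (measurable_pi_apply i)
  have hlip : ∀ x x', |cdf0 gphi x - cdf0 gphi x'| ≤ 1 * |x - x'| := by
    intro x x'
    have := Convex.norm_image_sub_le_of_norm_hasDerivWithin_le (f := cdf0 gphi) (f' := gphi) (s := Set.univ) (C := 1)
      (fun x _ => (gphi_nice.hasDeriv x).hasDerivWithinAt) (fun x _ => by
        rw [Real.norm_of_nonneg (gphi_pos x).le]
        have h1 := gphi_le x
        have h2 : Real.exp (-x ^ 2 / 2) ≤ 1 := by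
          rw [Real.exp_le_one_iff]; nlinarith [sq_nonneg x]
        linarith) convex_univ (Set.mem_univ x') (Set.mem_univ x)
    simpa using this
  refine main_of_map hn (compact_aux _ isCompact_Icc) (convex_aux _ (convex_Icc _ _))
    (interior_aux (Set.univ.pi fun _ => Set.Ioo (-(1/2)) (1/2)) _
      (isOpen_set_pi Set.finite_univ fun _ _ => isOpen_Ioo) ?_ ?_)
    (fun x => WithLp.toLp 2 (Q (WithLp.ofLp x))) 1 ?_ ?_ ?_ ?_ k hk
  · intro x hx
    exact ⟨fun i => (hx i trivial).1.le, fun i => (hx i trivial).2.le⟩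
  · intro i _
    constructor <;> simp
  · apply LipschitzWith.of_dist_le_mul
    intro x x'
    rw [dist_eq_norm, dist_eq_norm]
    exact coord_lip (cdf0 gphi) zero_le_one hlip x x'
  · norm_num
  · intro x
    exact ⟨fun i => (gphi_nice.gt_half _).le, fun i => (gphi_nice.lt_half _).le⟩
  · apply assemble Q hQm _ hm
    have : SigmaFinite (Measure.map (cdf0 gphi) (ProbabilityTheory.gaussianReal 0 1)) := by
      rw [map_cdf_gauss]; infer_instance
    rw [hQ, Measure.pi_map_pi (f := fun _ : Fin n => cdf0 gphi) (fun i => hcm.aemeasurable)]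
    simp only [map_cdf_gauss]
    rw [← Measure.restrict_pi_pi (fun _ : Fin n => (volume : Measure ℝ)), ← volume_pi, Set.pi_univ_Icc]

theorem finite_case (n : ℕ) (hn : 1 ≤ n) (p : ℝ) (hp : 2 ≤ p) (r : ℝ) (hr : 0 < r)
    (hvol : volume (WithLp.ofLp ⁻¹' {y | Np p y ≤ r ^ p} : Set (EuclideanSpace ℝ (Fin n))) = 1)
    (k : ℕ) (hk : 1 ≤ k) :
    (1 / 392 : ℝ) * lambdaLip (stdGaussian n) k ≤
      lambdaLip (Measure.comap (Subtype.val :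
        (WithLp.ofLp ⁻¹' {y | Np p y ≤ r ^ p} : Set (EuclideanSpace ℝ (Fin n))) →
          EuclideanSpace ℝ (Fin n)) volume) k := by
  have hp0 : 0 < p := by linarith
  have hZ := Zp_pos hp
  have : Nonempty (Fin n) := ⟨⟨0, hn⟩⟩
  set Bx : Set (Fin n → ℝ) := {y | Np p y ≤ r ^ p} with hBx
  have hcl : IsClosed Bx := isClosed_le (Np_cont hp) continuous_const
  have hm : MeasurableSet Bx := hcl.measurableSet
  rw [(PiLp.volume_preserving_ofLp (Fin n)).measure_preimage hm.nullMeasurableSet] at hvol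
  have hrn : r ^ n = Real.Gamma (n / p + 1) / Zp p ^ n := by
    have h1 := volume_sum_rpow_le (Fin n) (show 1 ≤ p by linarith) r
    have h2 : {x : Fin n → ℝ | (∑ i, |x i| ^ p) ^ (1 / p) ≤ r} = Bx := by
      ext x
      have h3 := Np_nonneg p x
      change (Np p x) ^ (1 / p) ≤ r ↔ Np p x ≤ r ^ p
      rw [one_div, Real.rpow_inv_le_iff_of_pos h3 hr.le hp0]
    rw [h2, hvol, Fintype.card_fin, ← ENNReal.ofReal_pow hr.le, ← ENNReal.ofReal_mul (by positivity)] at h1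
    have h3 := ENNReal.ofReal_eq_one.1 h1.symm
    have hG : 0 < Real.Gamma (n / p + 1) := Real.Gamma_pos_of_pos (by positivity)
    change r ^ n * (Zp p ^ n / Real.Gamma (n / p + 1)) = 1 at h3
    field_simp at h3 ⊢
    linarith
  have hT : ∀ y, Tn p y ∈ Bx := fun y => Tn_mem hp hn hr hrn y
  obtain ⟨w, hwc, hwmap, hw1, hw2⟩ := exists_w hp
  have hwm : Measurable (fun (x : Fin n → ℝ) i => w (x i)) :=
    measurable_pi_lambda _ fun i => hwc.measurable.comp (measurable_pi_apply i)
  set Q : (Fin n → ℝ) → (Fin n → ℝ) := fun x => Tn p (fun i => w (x i)) with hQ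
  have hQm : Measurable Q := (Tn_meas hp).comp hwm
  have hbd : ∀ x ∈ Bx, ∀ i, |x i| ≤ r := by
    intro x hx i
    have h1 : |x i| ^ p ≤ r ^ p := le_trans
      (Finset.single_le_sum (f := fun i => |x i| ^ p) (fun i _ => by positivity) (Finset.mem_univ i)) hx
    exact (Real.rpow_le_rpow_iff (abs_nonneg _) hr.le hp0).1 h1
  have hcpt : IsCompact Bx := by
    refine (isCompact_Icc (a := fun _ => -r) (b := fun _ => r)).of_isClosed_subset hcl fun x hx => ?_
    exact ⟨fun i => (abs_le.1 (hbd x hx i)).1, fun i => (abs_le.1 (hbd x hx i)).2⟩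
  have hconv : Convex ℝ Bx := by
    intro x hx y hy a b ha hb hab
    have hx : Np p x ≤ r ^ p := hx
    have hy : Np p y ≤ r ^ p := hy
    have h1 : Np p (a • x + b • y) ≤ a * Np p x + b * Np p y := by
      unfold Np
      rw [Finset.mul_sum, Finset.mul_sum, ← Finset.sum_add_distrib]
      apply Finset.sum_le_sum
      intro i _
      have h2 := (convexOn_rpow (show 1 ≤ p by linarith)).2 (abs_nonneg (x i)) (abs_nonneg (y i)) ha hb hab
      simp only [smul_eq_mul] at h2
      refine le_trans ?_ h2
      apply Real.rpow_le_rpow (abs_nonneg _) _ hp0.le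
      simp only [Pi.add_apply, Pi.smul_apply, smul_eq_mul]
      refine (abs_add_le _ _).trans ?_
      rw [abs_mul, abs_mul, abs_of_nonneg ha, abs_of_nonneg hb]
    change Np p (a • x + b • y) ≤ r ^ p
    have hrp : r ^ p = a * r ^ p + b * r ^ p := by rw [← add_mul, hab, one_mul]
    rw [hrp]
    refine h1.trans ?_
    gcongr
  refine main_of_map hn (compact_aux _ hcpt) (convex_aux _ hconv)
    (interior_aux {y | Np p y < r ^ p} _ (isOpen_lt (Np_cont hp) continuous_const)
      (fun x (hx : Np p x < r ^ p) => show Np p x ≤ r ^ p from hx.le) ?_)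
    (fun x => WithLp.toLp 2 (Q (WithLp.ofLp x))) 14 ?_ ?_ (fun x => hT _) ?_ k hk
  · change Np p (0 : Fin n → ℝ) < r ^ p
    have : Np p (0 : Fin n → ℝ) = 0 := by
      unfold Np; simp [Real.zero_rpow hp0.ne']
    rw [this]; positivity
  · exact radial_lip hp hn w hw1 hw2
  · norm_num
  · apply assemble Q hQm _ hm
    have hprobw : IsProbabilityMeasure (volume.withDensity (fun x => ENNReal.ofReal (gp p x))) := by
      rw [← hwmap]; exact Measure.isProbabilityMeasure_map hwc.measurable.aemeasurable
    have hsf : SigmaFinite (Measure.map w (ProbabilityTheory.gaussianReal 0 1)) := by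
      rw [hwmap]; infer_instance
    have h1 : Measure.map (fun (x : Fin n → ℝ) i => w (x i))
        (Measure.pi fun _ : Fin n => ProbabilityTheory.gaussianReal 0 1) =
        volume.withDensity (fun y : Fin n → ℝ => ∏ i, ENNReal.ofReal (gp p (y i))) := by
      rw [Measure.pi_map_pi (f := fun _ : Fin n => w) (fun i => hwc.measurable.aemeasurable)]
      simp only [hwmap]
      exact pi_withDensity_fin n _ (gp_nice hp).cont.measurable.ennreal_ofReal
    have h2 : Measure.map Q (Measure.pi fun _ : Fin n => ProbabilityTheory.gaussianReal 0 1) =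
        Measure.map (Tn p) (volume.withDensity (fun y : Fin n → ℝ => ∏ i, ENNReal.ofReal (gp p (y i)))) := by
      rw [← h1, Measure.map_map (Tn_meas hp) hwm]
      rfl
    have i1 : IsProbabilityMeasure (Measure.map Q (Measure.pi fun _ : Fin n => ProbabilityTheory.gaussianReal 0 1)) :=
      Measure.isProbabilityMeasure_map hQm.aemeasurable
    have i2 : IsProbabilityMeasure ((volume : Measure (Fin n → ℝ)).restrict Bx) :=
      ⟨by rw [Measure.restrict_apply_univ, hvol]⟩
    apply Measure.eq_of_le_of_isProbabilityMeasure
    rw [h2]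
    exact map_T_le hp hn Bx hm hT

/-- **Spectral comparison for the (volume-normalized) unit ball of `ℓ_pⁿ`, `p ∈ [2,∞]`**
(Latała–Wojtaszczyk + Contraction Principle): denoting by `B̃_pⁿ` the unit ball of
`ℓ_pⁿ` rescaled by a homothety to have Lebesgue volume `1`, endowed with the Euclidean
distance and the uniform (Lebesgue) probability measure, one has
`λ_k^Lip(B̃_pⁿ,|·|,λ_{B̃_pⁿ}) ≥ (1/392)·λ_k^Lip(ℝⁿ,|·|,γⁿ)` for all `k ≥ 1`. -/
theorem spectral_comparison_lp_ball
    (n : ℕ) (hn : 1 ≤ n) (p : ℝ≥0∞) (hp : 2 ≤ p)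
    (r : ℝ) (hr : 0 < r)
    (B : Set (EuclideanSpace ℝ (Fin n)))
    (hB : B = r • lpUnitBall n p)
    (hvol : volume B = 1)
    (k : ℕ) (hk : 1 ≤ k) :
    (1 / 392 : ℝ) * lambdaLip (stdGaussian n) k ≤
      lambdaLip (Measure.comap (Subtype.val : B → EuclideanSpace ℝ (Fin n)) volume) k := by
  by_cases h : p = ∞
  · have hB2 : B = WithLp.ofLp ⁻¹' (Set.Icc (fun _ => -r) (fun _ => r)) := by
      rw [hB]
      ext x
      rw [Set.mem_smul_set_iff_inv_smul_mem₀ hr.ne', lpUnitBall, if_pos h]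
      have e : ∀ i, |(r⁻¹ • x) i| ≤ 1 ↔ (-r ≤ x i ∧ x i ≤ r) := by
        intro i
        rw [PiLp.smul_apply, smul_eq_mul, abs_mul, abs_of_pos (inv_pos.2 hr), inv_mul_le_iff₀ hr, mul_one, abs_le]
      change (∀ i, |(r⁻¹ • x) i| ≤ 1) ↔ _
      simp only [e]
      exact ⟨fun h => ⟨fun i => (h i).1, fun i => (h i).2⟩, fun h i => ⟨h.1 i, h.2 i⟩⟩
    subst hB2
    exact cube_case n hn r hr hvol k hk
  · have hp2 : 2 ≤ p.toReal := by
      have := ENNReal.toReal_mono h hp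
      simpa using this
    have hB2 : B = WithLp.ofLp ⁻¹' {y | Np p.toReal y ≤ r ^ p.toReal} := by
      rw [hB]
      ext x
      rw [Set.mem_smul_set_iff_inv_smul_mem₀ hr.ne', lpUnitBall, if_neg h]
      change Np p.toReal (r⁻¹ • WithLp.ofLp x) ≤ 1 ↔ Np p.toReal (WithLp.ofLp x) ≤ r ^ p.toReal
      rw [Np_smul _ (inv_pos.2 hr).le, Real.inv_rpow hr.le, inv_mul_le_iff₀ (by positivity), mul_one]
    subst hB2
    exact finite_case n hn p.toReal hp2 r hr hvol k hk
end

section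
/- Let μ₁, μ₂ be probability measures on ℝ with continuous, everywhere positive densities f_{μ₁}, f_{μ₂} with respect to Lebesgue measure, and let T := F_{μ₂}^{−1} ∘ F_{μ₁} : ℝ → ℝ be the increasing monotone transport map. Then T pushes forward μ₁ onto μ₂ (i.e. T_*μ₁ = μ₂), and for every L > 0: if 𝓘♭_{μ₂}(v) ≥ (1/L)·𝓘♭_{μ₁}(v) for all v ∈ (0,1), then T is L-Lipschitz. -/
open MeasureTheory Filter Topology ENNReal

/-- The cumulative distribution function `F_μ(x) = μ((-∞,x])` of a measure on `ℝ`. -/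
noncomputable def cdf (μ : Measure ℝ) : ℝ → ℝ := fun x => (μ (Set.Iic x)).toReal

/-- The one-sided flat isoperimetric profile `𝓘♭_μ = f_μ ∘ F_μ⁻¹` of a measure on `ℝ`
with density `f` (here `F_μ⁻¹` is interpreted via `Function.invFun`). -/
noncomputable def flatIsopProfile (μ : Measure ℝ) (f : ℝ → ℝ) : ℝ → ℝ :=
  fun v => f (Function.invFun (cdf μ) v)

theorem cdf_aux (f : ℝ → ℝ) (hc : Continuous f) (hpos : ∀ x, 0 < f x) (μ : Measure ℝ)
    (hμ : μ = volume.withDensity fun x => ENNReal.ofReal (f x)) [IsProbabilityMeasure μ] :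
    (∀ x, HasDerivAt (cdf μ) (f x) x) ∧ StrictMono (cdf μ) ∧
    (∀ x, cdf μ x ∈ Set.Ioo (0 : ℝ) 1) ∧ (∀ v ∈ Set.Ioo (0 : ℝ) 1, ∃ x, cdf μ x = v) := by
  have hint : Integrable f := by
    refine ⟨hc.aestronglyMeasurable, ?_⟩
    rw [hasFiniteIntegral_iff_ofReal (Eventually.of_forall fun x => (hpos x).le)]
    have h1 : μ Set.univ = 1 := measure_univ
    rw [hμ, withDensity_apply _ MeasurableSet.univ, Measure.restrict_univ] at h1
    rw [h1]
    exact ENNReal.one_lt_top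
  have hF : ∀ x, cdf μ x = ∫ t in Set.Iic x, f t := by
    intro x
    rw [integral_eq_lintegral_of_nonneg_ae (Eventually.of_forall fun x => (hpos x).le)
      hc.aestronglyMeasurable, ← withDensity_apply _ measurableSet_Iic, ← hμ]
    rfl
  have hd : ∀ x, HasDerivAt (cdf μ) (f x) x := by
    intro x
    have h1 : cdf μ = fun y => (∫ t in Set.Iic (0:ℝ), f t) + ∫ t in (0:ℝ)..y, f t := by
      funext y
      rw [hF, ← intervalIntegral.integral_Iic_sub_Iic hint.integrableOn hint.integrableOn]
      ring
    rw [h1]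
    exact (intervalIntegral.integral_hasDerivAt_right hint.intervalIntegrable
      (hc.stronglyMeasurableAtFilter _ _) hc.continuousAt).const_add _
  have hm : StrictMono (cdf μ) := by
    apply strictMono_of_deriv_pos
    intro x
    rw [(hd x).deriv]
    exact hpos x
  have heq : cdf μ = ProbabilityTheory.cdf μ := by
    funext x
    rw [ProbabilityTheory.cdf_eq_real]
    rfl
  have hbot : Tendsto (cdf μ) atBot (𝓝 0) := by
    rw [heq]; exact ProbabilityTheory.tendsto_cdf_atBot μ
  have htop : Tendsto (cdf μ) atTop (𝓝 1) := by
    rw [heq]; exact ProbabilityTheory.tendsto_cdf_atTop μ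
  have hcont : Continuous (cdf μ) := continuous_iff_continuousAt.2 fun x => (hd x).continuousAt
  refine ⟨hd, hm, fun x => ⟨?_, ?_⟩, fun v hv => ?_⟩
  · exact lt_of_le_of_lt (hm.monotone.le_of_tendsto hbot (x - 1)) (hm (by linarith))
  · exact lt_of_lt_of_le (hm (by linarith)) (hm.monotone.ge_of_tendsto htop (x + 1))
  · exact mem_range_of_exists_le_of_exists_ge hcont
      ((hbot.eventually (gt_mem_nhds hv.1)).exists.imp fun _ h => le_of_lt h)
      ((htop.eventually (lt_mem_nhds hv.2)).exists.imp fun _ h => le_of_lt h)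

/-- **The increasing monotone transport map** (Bobkov–Houdré): for probability measures
`μ₁, μ₂` on `ℝ` with continuous positive densities, the map `T = F_{μ₂}⁻¹ ∘ F_{μ₁}`
pushes `μ₁` forward onto `μ₂`, and if `𝓘♭_{μ₂} ≥ (1/L)·𝓘♭_{μ₁}` on `(0,1)` then `T`
is `L`-Lipschitz. -/
theorem monotone_transport_lipschitz
    (f₁ f₂ : ℝ → ℝ) (hf₁c : Continuous f₁) (hf₂c : Continuous f₂)
    (hf₁pos : ∀ x, 0 < f₁ x) (hf₂pos : ∀ x, 0 < f₂ x)
    (μ₁ μ₂ : Measure ℝ)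
    (hμ₁ : μ₁ = volume.withDensity fun x => ENNReal.ofReal (f₁ x))
    (hμ₂ : μ₂ = volume.withDensity fun x => ENNReal.ofReal (f₂ x))
    [IsProbabilityMeasure μ₁] [IsProbabilityMeasure μ₂]
    (T : ℝ → ℝ) (hT : T = fun x => Function.invFun (cdf μ₂) (cdf μ₁ x)) :
    Measure.map T μ₁ = μ₂ ∧
      ∀ L : ℝ, 0 < L →
        (∀ v ∈ Set.Ioo (0 : ℝ) 1,
          (1 / L) * flatIsopProfile μ₁ f₁ v ≤ flatIsopProfile μ₂ f₂ v) →
        ∀ x y : ℝ, |T x - T y| ≤ L * |x - y| := by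
  obtain ⟨hd1, hm1, hr1, hs1⟩ := cdf_aux f₁ hf₁c hf₁pos μ₁ hμ₁
  obtain ⟨hd2, hm2, hr2, hs2⟩ := cdf_aux f₂ hf₂c hf₂pos μ₂ hμ₂
  have hFT : ∀ x, cdf μ₂ (T x) = cdf μ₁ x := by
    intro x
    rw [hT]
    exact Function.invFun_eq (hs2 _ (hr1 x))
  have hTm : StrictMono T := by
    intro x y hxy
    rw [← hm2.lt_iff_lt, hFT, hFT]
    exact hm1 hxy
  have hTs : Function.Surjective T := by
    intro y
    obtain ⟨x, hx⟩ := hs1 _ (hr2 y)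
    exact ⟨x, hm2.injective (by rw [hFT, hx])⟩
  have hTc : Continuous T := hTm.monotone.continuous_of_surjective hTs
  refine ⟨?_, fun L hL h x y => ?_⟩
  · have : IsProbabilityMeasure (Measure.map T μ₁) :=
      Measure.isProbabilityMeasure_map hTc.aemeasurable
    refine Measure.ext_of_Iic _ _ fun a => ?_
    obtain ⟨b, rfl⟩ := hTs a
    rw [Measure.map_apply hTc.measurable measurableSet_Iic]
    have h1 : T ⁻¹' Set.Iic (T b) = Set.Iic b := by
      ext x
      simp [hTm.le_iff_le]
    rw [h1, ← ENNReal.toReal_eq_toReal_iff' (measure_ne_top _ _) (measure_ne_top _ _)]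
    exact (hFT b).symm
  · have hdT : ∀ x, HasDerivAt T (f₁ x / f₂ (T x)) x := by
      intro x
      have h2 : HasDerivAt (Function.invFun (cdf μ₂)) (f₂ (T x))⁻¹ (cdf μ₁ x) := by
        have hst : HasStrictDerivAt (cdf μ₂) (f₂ (T x)) (T x) :=
          hasStrictDerivAt_of_hasDerivAt_of_continuousAt
            (Eventually.of_forall hd2) hf₂c.continuousAt
        rw [← hFT x]
        exact (hst.to_local_left_inverse (hf₂pos _).ne' (Eventually.of_forall
          (Function.leftInverse_invFun hm2.injective))).hasDerivAt
      rw [hT] at h2 ⊢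
      have h3 := h2.comp x (hd1 x)
      rw [div_eq_inv_mul]
      exact h3
    have hb : ∀ x, ‖f₁ x / f₂ (T x)‖ ≤ L := by
      intro x
      have h1 := h _ (hr1 x)
      have h2 : flatIsopProfile μ₂ f₂ (cdf μ₁ x) = f₂ (T x) := by rw [hT]; rfl
      have h3 : flatIsopProfile μ₁ f₁ (cdf μ₁ x) = f₁ x := by
        unfold flatIsopProfile
        rw [Function.leftInverse_invFun hm1.injective]
      rw [h2, h3, one_div, inv_mul_le_iff₀ hL] at h1
      rw [Real.norm_of_nonneg (div_pos (hf₁pos _) (hf₂pos _)).le, div_le_iff₀ (hf₂pos _)]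
      exact h1
    have := Convex.norm_image_sub_le_of_norm_hasDerivWithin_le
      (fun x _ => (hdT x).hasDerivWithinAt) (fun x _ => hb x) convex_univ
      (Set.mem_univ y) (Set.mem_univ x)
    simpa [Real.norm_eq_abs] using this
end
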